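/- Let n > r ≥ 0 be integers. Suppose that for every pair of groups (Γ₀, Γ₁) we are given a ℂ-linear map φ_{Γ₀,Γ₁} : H^n(Γ₀ × Γ₁; ℂ) → H^r(Γ₀ × Γ₁; ℂ) between group cohomology groups with trivial ℂ coefficients, and that this family is natural: for all group homomorphisms f₀ : Γ₀ → Γ₀' and f₁ : Γ₁ → Γ₁', the restriction maps (f₀ × f₁)^* in both degrees intertwine φ_{Γ₀',Γ₁'} and φ_{Γ₀,Γ₁}. Then φ_{Γ₀,Γ₁} = 0 for every pair (Γ₀, Γ₁). -/

import Mathlib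

/-! Group cohomology with trivial ℂ coefficients, via inhomogeneous cochains. -/

/-- The differential on inhomogeneous cochains (trivial ℂ coefficients):
`(dφ)(g₁,…,g_{n+1}) = φ(g₂,…,g_{n+1}) + Σ_{j=1}^{n} (−1)^j φ(g₁,…,g_j g_{j+1},…,g_{n+1})
+ (−1)^{n+1} φ(g₁,…,gₙ)`. -/
noncomputable def gcD (G : Type) [Group G] (n : ℕ) :
    ((Fin n → G) → ℂ) →ₗ[ℂ] ((Fin (n + 1) → G) → ℂ) where
  toFun φ := fun v =>
    φ (fun i => v i.succ)
      + ∑ j ∈ Finset.range n, (-1 : ℂ) ^ (j + 1) *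
          φ (fun i : Fin n =>
            if i.val < j then v i.castSucc
            else if i.val = j then
              v ⟨j % (n + 1), Nat.mod_lt j (Nat.succ_pos n)⟩ *
                v ⟨(j + 1) % (n + 1), Nat.mod_lt (j + 1) (Nat.succ_pos n)⟩
            else v i.succ)
      + (-1 : ℂ) ^ (n + 1) * φ (fun i => v i.castSucc)
  map_add' φ ψ := by
    funext v
    simp only [Pi.add_apply, mul_add, Finset.sum_add_distrib]
    ring
  map_smul' c φ := by
    funext v
    simp only [Pi.smul_apply, smul_eq_mul, RingHom.id_apply, mul_add, Finset.mul_sum]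
    congr 1
    congr 1
    · exact Finset.sum_congr rfl (fun x _ => by ring)
    · ring

/-- The `n`-cocycles. -/
noncomputable def gcZ (G : Type) [Group G] (n : ℕ) : Submodule ℂ ((Fin n → G) → ℂ) :=
  LinearMap.ker (gcD G n)

/-- The `n`-coboundaries (`⊥` in degree 0). -/
noncomputable def gcB (G : Type) [Group G] : (n : ℕ) → Submodule ℂ ((Fin n → G) → ℂ)
  | 0 => ⊥
  | (k + 1) => LinearMap.range (gcD G k)

/-- The group cohomology `H^n(G; ℂ)` with trivial coefficients. -/
noncomputable abbrev gcH (G : Type) [Group G] (n : ℕ) :=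
  gcZ G n ⧸ (gcB G n).comap (gcZ G n).subtype

/-- Pullback of cochains along a group homomorphism. -/
noncomputable def gcRes {G G' : Type} [Group G] [Group G'] (f : G →* G') (n : ℕ) :
    ((Fin n → G') → ℂ) →ₗ[ℂ] ((Fin n → G) → ℂ) where
  toFun φ := fun v => φ (fun i => f (v i))
  map_add' _ _ := rfl
  map_smul' _ _ := rfl

lemma gcRes_comm {G G' : Type} [Group G] [Group G'] (f : G →* G') (n : ℕ) :
    (gcD G n).comp (gcRes f n) = (gcRes f (n + 1)).comp (gcD G' n) := by
  apply LinearMap.ext; intro φ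
  funext v
  simp only [LinearMap.comp_apply, gcD, gcRes, LinearMap.coe_mk, AddHom.coe_mk]
  congr 2
  · apply Finset.sum_congr rfl
    intro j _
    congr 1
    congr 1
    funext i
    split_ifs <;> simp [map_mul]

lemma gcRes_mem_ker {G G' : Type} [Group G] [Group G'] (f : G →* G') (n : ℕ)
    {φ : (Fin n → G') → ℂ} (hφ : φ ∈ gcZ G' n) : gcRes f n φ ∈ gcZ G n := by
  have h := LinearMap.congr_fun (gcRes_comm f n) φ
  simp only [LinearMap.comp_apply] at h
  simp only [gcZ, LinearMap.mem_ker] at hφ ⊢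
  rw [h, hφ, map_zero]

lemma gcRes_mem_b {G G' : Type} [Group G] [Group G'] (f : G →* G') (n : ℕ)
    {φ : (Fin n → G') → ℂ} (hφ : φ ∈ gcB G' n) : gcRes f n φ ∈ gcB G n := by
  cases n with
  | zero =>
    simp only [gcB, Submodule.mem_bot] at hφ ⊢
    rw [hφ]; exact map_zero _
  | succ k =>
    obtain ⟨ψ, hψ⟩ := hφ
    refine ⟨gcRes f k ψ, ?_⟩
    have h := LinearMap.congr_fun (gcRes_comm f k) ψ
    simp only [LinearMap.comp_apply] at h
    rw [h, hψ]

/-- The pullback (restriction) map on group cohomology `H^n(G';ℂ) → H^n(G;ℂ)`. -/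
noncomputable def gcHmap {G G' : Type} [Group G] [Group G'] (f : G →* G') (n : ℕ) :
    gcH G' n →ₗ[ℂ] gcH G n :=
  Submodule.liftQ _
    (((gcB G n).comap (gcZ G n).subtype).mkQ.comp
      ((gcRes f n).restrict (fun φ hφ => gcRes_mem_ker f n hφ)))
    (by
      intro x hx
      simp only [LinearMap.mem_ker, LinearMap.comp_apply, Submodule.mkQ_apply,
        Submodule.Quotient.mk_eq_zero, Submodule.mem_comap]
      exact gcRes_mem_b f n hx)

/-!
Filter `Hⁿ(Γ₀ × Γ₁)` by the degree over `Γ₁`, as in the Lyndon–Hochschild–Serre spectral sequence.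
Skeleta of classifying spaces are not aspherical, but there are homomorphisms `f : G → Γ` which
behave like the inclusion of a `(p - 1)`-skeleton: in any bounded range of degrees, after taking the
product with an arbitrary group and for arbitrary coefficients, they kill exactly the classes of
filtration at least `p`. In the spirit of Kan and Thurston, they are obtained from free groups by
amalgamating, over the kernel of the map constructed so far, with an overgroup of that kernel in
which its cohomology dies.

Let `x` have degree `n` and let `y = φ(x) ≠ 0` have degree `r < n` and exact filtration `b`. Choose
`f₁ : G₁ → Γ₁` killing exactly the classes of filtration greater than `b`, and for
`f₀ : G₀ → Γ₀` a tower of such maps, mimicking an `(r - b)`-dimensional space over `Γ₀`: the part of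
`x` of degree greater than `r - b` over `Γ₀` dies, so its filtration over `Γ₁` exceeds `b` because
`n > r`, while classes like `y` survive. Then `(f₀ × f₁)^*` kills `x` but not `y`, which contradicts
naturality.
-/

namespace SkeletalGroups

universe u v w

open CategoryTheory

section Cohomology

variable {k : Type u} [CommRing k] {G K L : Type u} [Group G] [Group K] [Group L]
  {U V W : Type u} [AddCommGroup U] [AddCommGroup V] [AddCommGroup W]
  [Module k U] [Module k V] [Module k W]
  {ρ : Representation k G U} {σ : Representation k K V} {τ : Representation k L W}
  {f : K →* G} {g : L →* K} {φ : U →ₗ[k] V}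

/-- The underlying module of Mathlib's `groupCohomology`, for an unbundled representation. -/
abbrev H (ρ : Representation k G U) (n : ℕ) : Type u := groupCohomology (Rep.of ρ) n

/-- The compatible pairs `(f, φ)` of group cohomology: `φ` intertwines the restriction of `ρ`
along `f` with `σ`. -/
def IsCompatible (ρ : Representation k G U) (σ : Representation k K V) (f : K →* G)
    (φ : U →ₗ[k] V) : Prop :=
  ∀ x u, φ (ρ (f x) u) = σ x (φ u)

/-- The map induced on cohomology by a compatible pair. -/
noncomputable def map (h : IsCompatible ρ σ f φ) (n : ℕ) : H ρ n →ₗ[k] H σ n :=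
  (groupCohomology.map (A := Rep.of ρ) (B := Rep.of σ) f
    (Rep.ofHom ⟨φ, fun x => LinearMap.ext (h x)⟩) n).hom

theorem isCompatible_res (ρ : Representation k G U) (f : K →* G) :
    IsCompatible ρ (ρ.comp f) f LinearMap.id := fun _ _ => rfl

/-- Restriction along a group homomorphism. -/
noncomputable abbrev res (f : K →* G) {ρ : Representation k G U} (n : ℕ) :
    H ρ n →ₗ[k] H (ρ.comp f) n :=
  map (isCompatible_res ρ f) n

theorem IsCompatible.comp {φ : U →ₗ[k] V} {ψ : V →ₗ[k] W} (h : IsCompatible ρ σ f φ)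
    (h' : IsCompatible σ τ g ψ) : IsCompatible ρ τ (f.comp g) (ψ ∘ₗ φ) := fun x u =>
  (congrArg ψ (h (g x) u)).trans (h' x (φ u))

theorem map_comp {φ : U →ₗ[k] V} {ψ : V →ₗ[k] W} (h : IsCompatible ρ σ f φ)
    (h' : IsCompatible σ τ g ψ) (n : ℕ) (x : H ρ n) :
    map h' n (map h n x) = map (h.comp h') n x :=
  (congrArg (fun F => F.hom x) (groupCohomology.map_comp f g
    (Rep.ofHom ⟨φ, fun x => LinearMap.ext (h x)⟩ : Rep.res f (Rep.of ρ) ⟶ Rep.of σ)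
    (Rep.ofHom ⟨ψ, fun x => LinearMap.ext (h' x)⟩ : Rep.res g (Rep.of σ) ⟶ Rep.of τ) n)).symm

theorem map_map {χ : U →ₗ[k] W} {e : L →* G} {φ : U →ₗ[k] V} {ψ : V →ₗ[k] W}
    (h : IsCompatible ρ σ f φ) (h' : IsCompatible σ τ g ψ) (h'' : IsCompatible ρ τ e χ)
    (he : e = f.comp g) (hχ : χ = ψ ∘ₗ φ) (n : ℕ) (x : H ρ n) :
    map h' n (map h n x) = map h'' n x := by
  subst he hχ
  exact map_comp h h' n x

theorem isCompatible_id (ρ : Representation k G U) :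
    IsCompatible ρ ρ (MonoidHom.id G) LinearMap.id := fun _ _ => rfl

theorem map_id (n : ℕ) (x : H ρ n) : map (isCompatible_id ρ) n x = x :=
  congrArg (fun F => F.hom x) (groupCohomology.map_id (B := Rep.of ρ) n)

theorem res_res (f : K →* G) (g : L →* K) (n : ℕ) (x : H ρ n) :
    res g n (res f n x) = res (f.comp g) n x :=
  map_comp _ _ n x

theorem map_eq_zero_of_res_eq_zero {e : L →* G} {φ : U →ₗ[k] W} (h : IsCompatible ρ τ e φ)
    (he : e = f.comp g) {n : ℕ} {x : H ρ n} (hx : res f n x = 0) : map h n x = 0 := by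
  subst he
  have hφ : IsCompatible (ρ.comp f) τ g φ := h
  rw [← map_map (isCompatible_res ρ f) hφ h rfl rfl, hx, map_zero]

end Cohomology

section DegreeZero

variable {k : Type u} [CommRing k] {G K : Type u} [Group G] [Group K]
  {U V : Type u} [AddCommGroup U] [AddCommGroup V] [Module k U] [Module k V]
  {ρ : Representation k G U} {σ : Representation k K V} {f : K →* G} {φ : U →ₗ[k] V}

/-- The inclusion of `H⁰`, the module of invariants, into the coefficients. -/
noncomputable def eval₀ (ρ : Representation k G U) : H ρ 0 →ₗ[k] U :=
  ρ.invariants.subtype ∘ₗ (groupCohomology.H0Iso (Rep.of ρ)).hom.hom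

theorem eval₀_injective (ρ : Representation k G U) : Function.Injective (eval₀ ρ) :=
  Subtype.val_injective.comp (groupCohomology.H0Iso (Rep.of ρ)).toLinearEquiv.injective

theorem apply_eval₀ (g : G) (x : H ρ 0) : ρ g (eval₀ ρ x) = eval₀ ρ x :=
  ((groupCohomology.H0Iso (Rep.of ρ)).hom.hom x).2 g

theorem exists_eval₀_eq {u : U} (hu : ∀ g, ρ g u = u) : ∃ x, eval₀ ρ x = u :=
  ⟨(groupCohomology.H0Iso (Rep.of ρ)).toLinearEquiv.symm ⟨u, hu⟩,
    congrArg Subtype.val ((groupCohomology.H0Iso (Rep.of ρ)).toLinearEquiv.apply_symm_apply _)⟩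

theorem eval₀_map (h : IsCompatible ρ σ f φ) (x : H ρ 0) :
    eval₀ σ (map h 0 x) = φ (eval₀ ρ x) :=
  congrArg (fun F => F.hom x) (groupCohomology.map_H0Iso_hom_f f (A := Rep.of ρ) (B := Rep.of σ)
    (Rep.ofHom ⟨φ, fun x => LinearMap.ext (h x)⟩))

theorem map_zero_injective (h : IsCompatible ρ σ f φ) (hφ : Function.Injective φ) :
    Function.Injective (map h 0) := fun x y hxy =>
  eval₀_injective ρ <| hφ <| by rw [← eval₀_map h, hxy, eval₀_map h]

end DegreeZero

section LongExactSequence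

variable {k : Type u} [CommRing k] {G K : Type u} [Group G] [Group K]
  {U V W : Type u} [AddCommGroup U] [AddCommGroup V] [AddCommGroup W]
  [Module k U] [Module k V] [Module k W]
  {ρ : Representation k G U} {σ : Representation k G V} {τ : Representation k G W}
  {i : U →ₗ[k] V} {p : V →ₗ[k] W}

/-- `0 → ρ → σ → τ → 0` is a short exact sequence of representations of `G`. -/
structure IsShortExact (ρ : Representation k G U) (σ : Representation k G V)
    (τ : Representation k G W) (i : U →ₗ[k] V) (p : V →ₗ[k] W) : Prop where
  compat_left : IsCompatible ρ σ (MonoidHom.id G) i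
  compat_right : IsCompatible σ τ (MonoidHom.id G) p
  injective : Function.Injective i
  exact : Function.Exact i p
  surjective : Function.Surjective p

namespace IsShortExact

theorem comp (h : IsShortExact ρ σ τ i p) (f : K →* G) :
    IsShortExact (ρ.comp f) (σ.comp f) (τ.comp f) i p where
  compat_left x := h.compat_left (f x)
  compat_right x := h.compat_right (f x)
  injective := h.injective
  exact := h.exact
  surjective := h.surjective

/-- The short exact sequence as a short complex in Mathlib's category of representations. -/
noncomputable abbrev complex (h : IsShortExact ρ σ τ i p) : ShortComplex (Rep.{u} k G) where
  X₁ := Rep.of ρ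
  X₂ := Rep.of σ
  X₃ := Rep.of τ
  f := Rep.ofHom ⟨i, fun g => LinearMap.ext (h.compat_left g)⟩
  g := Rep.ofHom ⟨p, fun g => LinearMap.ext (h.compat_right g)⟩
  zero := by
    ext u
    exact h.exact.apply_apply_eq_zero u

theorem shortExact_complex (h : IsShortExact ρ σ τ i p) : h.complex.ShortExact where
  exact := by
    refine (ShortComplex.exact_map_iff_of_faithful _ (forget₂ (Rep k G) (ModuleCat k))).1 ?_
    exact (ShortComplex.ShortExact.moduleCat_exact_iff_function_exact _).2 h.exact
  mono_f := (Rep.mono_iff_injective _).2 h.injective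
  epi_g := (Rep.epi_iff_surjective _).2 h.surjective

/-- The connecting homomorphism. -/
noncomputable def δ (h : IsShortExact ρ σ τ i p) (n : ℕ) : H τ n →ₗ[k] H ρ (n + 1) :=
  (groupCohomology.δ h.shortExact_complex n (n + 1) rfl).hom

theorem exact_map_δ (h : IsShortExact ρ σ τ i p) (n : ℕ) :
    Function.Exact (map h.compat_right n) (h.δ n) :=
  (ShortComplex.ShortExact.moduleCat_exact_iff_function_exact _).1
    (groupCohomology.mapShortComplex₃_exact h.shortExact_complex rfl)

theorem exact_δ_map (h : IsShortExact ρ σ τ i p) (n : ℕ) :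
    Function.Exact (h.δ n) (map h.compat_left (n + 1)) :=
  (ShortComplex.ShortExact.moduleCat_exact_iff_function_exact _).1
    (groupCohomology.mapShortComplex₁_exact h.shortExact_complex rfl)

theorem map_δ {U' V' W' : Type u} [AddCommGroup U'] [AddCommGroup V'] [AddCommGroup W']
    [Module k U'] [Module k V'] [Module k W'] {ρ' : Representation k K U'}
    {σ' : Representation k K V'} {τ' : Representation k K W'} {i' : U' →ₗ[k] V'}
    {p' : V' →ₗ[k] W'} (h : IsShortExact ρ σ τ i p) (h' : IsShortExact ρ' σ' τ' i' p')
    {f : K →* G} {α : U →ₗ[k] U'} {β : V →ₗ[k] V'} {γ : W →ₗ[k] W'}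
    (hα : IsCompatible ρ ρ' f α) (hβ : IsCompatible σ σ' f β) (hγ : IsCompatible τ τ' f γ)
    (hi : β ∘ₗ i = i' ∘ₗ α) (hp : γ ∘ₗ p = p' ∘ₗ β) (n : ℕ) (x : H τ n) :
    map hα (n + 1) (h.δ n x) = h'.δ n (map hγ n x) := by
  let X := h.complex.map (groupCohomology.cochainsFunctor k G)
  let X' := h'.complex.map (groupCohomology.cochainsFunctor k K)
  let F : X ⟶ X' :=
    { τ₁ := groupCohomology.cochainsMap (A := Rep.of ρ) (B := Rep.of ρ') f
        (Rep.ofHom ⟨α, fun x => LinearMap.ext (hα x)⟩)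
      τ₂ := groupCohomology.cochainsMap (A := Rep.of σ) (B := Rep.of σ') f
        (Rep.ofHom ⟨β, fun x => LinearMap.ext (hβ x)⟩)
      τ₃ := groupCohomology.cochainsMap (A := Rep.of τ) (B := Rep.of τ') f
        (Rep.ofHom ⟨γ, fun x => LinearMap.ext (hγ x)⟩)
      comm₁₂ := by
        ext m c
        exact funext fun v => (LinearMap.congr_fun hi (c (f ∘ v))).symm
      comm₂₃ := by
        ext m c
        exact funext fun v => (LinearMap.congr_fun hp (c (f ∘ v))).symm }
  exact congrArg (fun D => D.hom x) (HomologicalComplex.HomologySequence.δ_naturality F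
    (groupCohomology.map_cochainsFunctor_shortExact h.shortExact_complex)
    (groupCohomology.map_cochainsFunctor_shortExact h'.shortExact_complex) n (n + 1) rfl)

theorem res_δ (h : IsShortExact ρ σ τ i p) (f : K →* G) (n : ℕ) (x : H τ n) :
    res f (n + 1) (h.δ n x) = (h.comp f).δ n (res f n x) :=
  h.map_δ (h.comp f) _ (isCompatible_res σ f) _ rfl rfl n x

end IsShortExact

end LongExactSequence

section FunctionModules

variable {k : Type u} [CommRing k] {G K L Γ Δ : Type u} [Group G] [Group K] [Group L] [Group Γ]
  [Group Δ] {M N : Type u} [AddCommGroup M] [AddCommGroup N] [Module k M] [Module k N]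

/-- For a homomorphism `q : K →* Γ` and a representation `ρ` of `K` on `M`, the representation of
`K` on the functions `Γ → M` by `(g • u) x = g • u ((q g)⁻¹ * x)`. For `q = id` it is coinduced
from the trivial subgroup. -/
def funRep (q : K →* Γ) (ρ : Representation k K M) : Representation k K (Γ → M) where
  toFun g := (ρ g).compLeft Γ ∘ₗ LinearMap.funLeft k M fun x => (q g)⁻¹ * x
  map_one' := by
    ext u x
    simp [LinearMap.funLeft]
  map_mul' g h := by
    ext u x
    simp [LinearMap.funLeft, mul_assoc]

theorem funRep_apply (q : K →* Γ) (ρ : Representation k K M) (g : K) (u : Γ → M) (x : Γ) :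
    funRep q ρ g u x = ρ g (u ((q g)⁻¹ * x)) := rfl

variable (k Γ M) in
/-- The embedding of `M` into `Γ → M` as constant functions. -/
def constMap : M →ₗ[k] Γ → M := LinearMap.pi fun _ => LinearMap.id

theorem isCompatible_constMap (q : K →* Γ) (ρ : Representation k K M) :
    IsCompatible ρ (funRep q ρ) (MonoidHom.id K) (constMap k Γ M) := fun _ _ => rfl

/-- Composition with `φ` after precomposition with `e`, on function modules. -/
def funMap (e : Δ →* Γ) (φ : M →ₗ[k] N) : (Γ → M) →ₗ[k] Δ → N :=
  φ.compLeft Δ ∘ₗ LinearMap.funLeft k M e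

theorem IsCompatible.funMap {ρ : Representation k K M} {σ : Representation k L N} {f : L →* K}
    {φ : M →ₗ[k] N} (h : IsCompatible ρ σ f φ) {q : K →* Γ} {q' : L →* Δ} {e : Δ →* Γ}
    (hq : q.comp f = e.comp q') :
    IsCompatible (funRep q ρ) (funRep q' σ) f (funMap e φ) := fun x u => by
  ext y
  have hx : q (f x) = e (q' x) := DFunLike.congr_fun hq x
  simp [SkeletalGroups.funMap, LinearMap.funLeft, funRep_apply, h x, hx]

variable (k Γ M) in
/-- The cokernel of `M → (Γ → M)`, used for dimension shifting. -/
abbrev Coker : Type u := (Γ → M) ⧸ LinearMap.range (constMap k Γ M)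

/-- The representation induced by `funRep q ρ` on the cokernel of `M → (Γ → M)`. -/
def cokerRep (q : K →* Γ) (ρ : Representation k K M) : Representation k K (Coker k Γ M) :=
  (funRep q ρ).quotient _ fun g => by
    rintro _ ⟨m, rfl⟩
    exact ⟨ρ g m, rfl⟩

theorem isShortExact_funRep (q : K →* Γ) (ρ : Representation k K M) :
    IsShortExact ρ (funRep q ρ) (cokerRep q ρ) (constMap k Γ M) (Submodule.mkQ _) where
  compat_left := isCompatible_constMap q ρ
  compat_right _ _ := rfl
  injective _ _ h := congrFun h 1
  exact := LinearMap.exact_map_mkQ_range _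
  surjective := Submodule.mkQ_surjective _

/-- The map induced by `funMap e φ` on cokernels. -/
def cokerMap (e : Δ →* Γ) (φ : M →ₗ[k] N) : Coker k Γ M →ₗ[k] Coker k Δ N :=
  Submodule.mapQ _ _ (funMap e φ) <| by
    rintro _ ⟨m, rfl⟩
    exact ⟨φ m, rfl⟩

theorem IsCompatible.cokerMap {ρ : Representation k K M} {σ : Representation k L N} {f : L →* K}
    {φ : M →ₗ[k] N} (h : IsCompatible ρ σ f φ) {q : K →* Γ} {q' : L →* Δ} {e : Δ →* Γ}
    (hq : q.comp f = e.comp q') :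
    IsCompatible (cokerRep q ρ) (cokerRep q' σ) f (cokerMap e φ) := fun x u => by
  obtain ⟨u, rfl⟩ := Submodule.mkQ_surjective _ u
  exact congrArg (Submodule.mkQ _) (h.funMap hq x u)

theorem cokerMap_id :
    cokerMap (MonoidHom.id Γ) (LinearMap.id : M →ₗ[k] M) = LinearMap.id :=
  Submodule.linearMap_qext _ rfl

/-- The connecting homomorphism of `0 → M → (Γ → M) → Coker k Γ M → 0`. -/
noncomputable abbrev shift (q : K →* Γ) (ρ : Representation k K M) (n : ℕ) :
    H (cokerRep q ρ) n →ₗ[k] H ρ (n + 1) :=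
  (isShortExact_funRep q ρ).δ n

theorem map_shift {ρ : Representation k K M} {σ : Representation k L N} {f : L →* K}
    {φ : M →ₗ[k] N} (h : IsCompatible ρ σ f φ) {q : K →* Γ} {q' : L →* Δ} {e : Δ →* Γ}
    (hq : q.comp f = e.comp q') (n : ℕ) (z : H (cokerRep q ρ) n) :
    map h (n + 1) (shift q ρ n z) = shift q' σ n (map (h.cokerMap hq) n z) :=
  (isShortExact_funRep q ρ).map_δ (isShortExact_funRep q' σ) h (h.funMap hq) (h.cokerMap hq)
    rfl rfl n z

theorem res_shift {q : K →* Γ} {ρ : Representation k K M} (f : L →* K) (n : ℕ)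
    (z : H (cokerRep q ρ) n) :
    res f (n + 1) (shift q ρ n z) =
      shift (q.comp f) (ρ.comp f) n (map (isCompatible_res (cokerRep q ρ) f) n z) :=
  (isShortExact_funRep q ρ).res_δ f n z

end FunctionModules

section RelativelyInjective

variable {k : Type u} [CommRing k] {G K L Γ : Type u} [Group G] [Group K] [Group L] [Group Γ]
  {M : Type u} [AddCommGroup M] [Module k M]

/-- `ρ` is an equivariant retract of the module of all functions from the group to `M`. -/
def IsRelativelyInjective (ρ : Representation k G M) : Prop :=
  ∃ R : (G → M) →ₗ[k] M, IsCompatible (funRep (MonoidHom.id G) ρ) ρ (MonoidHom.id G) R ∧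
    R ∘ₗ constMap k G M = LinearMap.id

/-- The retract factors through the module coinduced from the trivial subgroup, so this is Shapiro's
lemma. -/
theorem IsRelativelyInjective.eq_zero {ρ : Representation k G M} (h : IsRelativelyInjective ρ)
    {n : ℕ} (x : H ρ (n + 1)) : x = 0 := by
  obtain ⟨R, hR, hRc⟩ := h
  let ρ₁ := ρ.comp (⊥ : Subgroup G).subtype
  let σ := Representation.coind (⊥ : Subgroup G).subtype ρ₁
  let i : M →ₗ[k] Representation.coindV (⊥ : Subgroup G).subtype ρ₁ :=
    LinearMap.codRestrict _ (LinearMap.pi fun x => ρ x) fun m s x => by simp [ρ₁]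
  let p : Representation.coindV (⊥ : Subgroup G).subtype ρ₁ →ₗ[k] M :=
    R ∘ₗ LinearMap.pi (fun x => ρ x ∘ₗ LinearMap.proj x⁻¹) ∘ₗ Submodule.subtype _
  have hi : IsCompatible ρ σ (MonoidHom.id G) i := fun g m =>
    Subtype.ext <| funext fun x => (LinearMap.congr_fun (map_mul ρ x g) m).symm
  have hp : IsCompatible σ ρ (MonoidHom.id G) p := fun g u => by
    refine .trans (congrArg R (funext fun x => ?_)) (hR g _)
    change ρ x (u.1 (x⁻¹ * g)) = ρ g (ρ (g⁻¹ * x) (u.1 (g⁻¹ * x)⁻¹))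
    rw [← Module.End.mul_apply, ← map_mul, mul_inv_cancel_left, mul_inv_rev, inv_inv]
  have hpi : LinearMap.id = p ∘ₗ i := by
    rw [← hRc]
    ext m
    exact congrArg R (funext fun x => (ρ.self_inv_apply x m).symm)
  have : Subsingleton (H σ (n + 1)) :=
    (groupCohomology.coindIso (Rep.of ρ₁) (n + 1)).toLinearEquiv.toEquiv.subsingleton_congr.2 <|
      ModuleCat.subsingleton_of_isZero (isZero_groupCohomology_succ_of_subsingleton _ n)
  rw [← map_id (n + 1) x, ← map_map hi hp _ rfl hpi,
    Subsingleton.elim (map hi (n + 1) x) 0, map_zero]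

theorem exists_orbit_representatives (q : K →* Γ) :
    ∃ (o : Γ → Γ) (r : Γ → K), (∀ y, q (r y) * o y = y) ∧ ∀ g y, o (q g * y) = o y := by
  let s := QuotientGroup.rightRel q.range
  have hs (y : Γ) : ∃ g, q g * (Quotient.mk s y).out = y := by
    obtain ⟨g, hg⟩ :=
      QuotientGroup.rightRel_apply.1 (Quotient.exact (Quotient.out_eq (Quotient.mk s y)))
    exact ⟨g, by rw [hg, inv_mul_cancel_right]⟩
  choose r hr using hs
  refine ⟨fun y => (Quotient.mk s y).out, r, hr, fun g y => ?_⟩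
  refine congrArg Quotient.out (Quotient.sound (QuotientGroup.rightRel_apply.2 ⟨g⁻¹, ?_⟩))
  rw [mul_inv_rev, mul_inv_cancel_left, map_inv]

theorem isRelativelyInjective_funRep {q : K →* Γ} (hq : Function.Injective q)
    (ρ : Representation k K M) : IsRelativelyInjective (funRep q ρ) := by
  obtain ⟨o, r, hr, ho⟩ := exists_orbit_representatives q
  have hrq (g : K) (y : Γ) : r (q g * y) = g * r y := hq <| by
    rw [map_mul, ← mul_left_inj (o y), mul_assoc, hr, ← ho g y, hr]
  refine ⟨LinearMap.pi fun y => LinearMap.proj y ∘ₗ LinearMap.proj (r y), fun g u => ?_, rfl⟩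
  ext y
  change ρ g (u (g⁻¹ * r y) ((q g)⁻¹ * y)) = ρ g (u (r ((q g)⁻¹ * y)) ((q g)⁻¹ * y))
  rw [← map_inv, hrq]

theorem isRelativelyInjective_funRep_id_comp {f : L →* K} (hf : Function.Injective f)
    (ρ : Representation k K M) :
    IsRelativelyInjective ((funRep (MonoidHom.id K) ρ).comp f) :=
  isRelativelyInjective_funRep hf (ρ.comp f)

theorem isRelativelyInjective_funRep_funRep_id (q : K →* Γ) (ρ : Representation k K M) :
    IsRelativelyInjective (funRep q (funRep (MonoidHom.id K) ρ)) :=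
  ⟨LinearMap.pi fun x => LinearMap.pi fun y =>
    LinearMap.proj y ∘ₗ LinearMap.proj x ∘ₗ LinearMap.proj y, fun _ _ => rfl, rfl⟩

end RelativelyInjective

section Shapiro

variable {k : Type u} [CommRing k] {G K S Γ : Type u} [Group G] [Group K] [Group S] [Group Γ]
  {M U V W : Type u} [AddCommGroup M] [AddCommGroup U] [AddCommGroup V] [AddCommGroup W]
  [Module k M] [Module k U] [Module k V] [Module k W] {q : K →* Γ} {i : S →* K}

theorem isCompatible_proj (hqi : ∀ s, q (i s) = 1) (ρ : Representation k K M) (x : Γ) :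
    IsCompatible (funRep q ρ) (ρ.comp i) i (LinearMap.proj x) := fun s u => by
  simp [funRep_apply, hqi]

theorem IsShortExact.funRep {ρ : Representation k K U} {σ : Representation k K V}
    {τ : Representation k K W} {a : U →ₗ[k] V} {b : V →ₗ[k] W} (h : IsShortExact ρ σ τ a b)
    (q : K →* Γ) : IsShortExact (funRep q ρ) (funRep q σ) (funRep q τ)
      (funMap (MonoidHom.id Γ) a) (funMap (MonoidHom.id Γ) b) where
  compat_left := h.compat_left.funMap rfl
  compat_right := h.compat_right.funMap rfl
  injective _ _ huv := funext fun x => h.injective (congrFun huv x)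
  exact u := by
    refine ⟨fun hu => ?_, ?_⟩
    · choose v hv using fun x => (h.exact (u x)).1 (congrFun hu x)
      exact ⟨v, funext hv⟩
    · rintro ⟨v, rfl⟩
      exact funext fun x => h.exact.apply_apply_eq_zero (v x)
  surjective u := by
    choose v hv using fun x => h.surjective (u x)
    exact ⟨v, funext hv⟩

theorem exists_map_funMap_eq_of_forall_map_proj (hqi : ∀ s, q (i s) = 1)
    (hker : ∀ g, q g = 1 → ∃ s, i s = g) {σ : Representation k K V} {τ : Representation k K W}
    {b : V →ₗ[k] W} (hb : IsCompatible σ τ (MonoidHom.id K) b)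
    (hbi : IsCompatible (σ.comp i) (τ.comp i) (MonoidHom.id S) b)
    (hbf : IsCompatible (funRep q σ) (funRep q τ) (MonoidHom.id K) (funMap (MonoidHom.id Γ) b))
    (t : H (funRep q τ) 0)
    (ht : ∀ x, ∃ w, map hbi 0 w = map (isCompatible_proj hqi τ x) 0 t) :
    ∃ w, map hbf 0 w = t := by
  obtain ⟨o, r, hr, ho⟩ := exists_orbit_representatives q
  choose w hw using ht
  have hbw (x : Γ) : b (eval₀ _ (w x)) = eval₀ _ t x := by
    rw [← eval₀_map hbi, hw, eval₀_map, LinearMap.proj_apply]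
  let u : Γ → V := fun x => σ (r x) (eval₀ _ (w (o x)))
  have hu (g : K) : funRep q σ g u = u := by
    funext x
    have hox : o ((q g)⁻¹ * x) = o x := by rw [← map_inv, ho]
    obtain ⟨s, hs⟩ := hker ((r x)⁻¹ * (g * r ((q g)⁻¹ * x))) <| by
      rw [map_mul, map_mul, map_inv, inv_mul_eq_one, ← mul_left_inj (o x), hr, mul_assoc, ← hox,
        hr, mul_inv_cancel_left]
    change σ g (σ (r ((q g)⁻¹ * x)) (eval₀ _ (w (o ((q g)⁻¹ * x))))) = _
    rw [hox, ← Module.End.mul_apply, ← map_mul, ← mul_inv_cancel_left (r x) (g * _), ← hs, map_mul]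
    exact congrArg (σ (r x)) (apply_eval₀ s (w (o x)))
  obtain ⟨v, hv⟩ := exists_eval₀_eq hu
  refine ⟨v, eval₀_injective _ ?_⟩
  rw [eval₀_map, hv]
  funext x
  change b (σ (r x) (eval₀ _ (w (o x)))) = eval₀ _ t x
  conv_rhs => rw [← apply_eval₀ (r x) t, funRep_apply, inv_mul_eq_of_eq_mul (hr x).symm]
  rw [← hbw]
  exact hb (r x) _

/-- A form of Shapiro's lemma: `funRep q ρ` is a product, over the cosets of `q.range`, of modules
coinduced from `q.ker`. -/
theorem eq_zero_of_forall_map_proj_eq_zero (hi : Function.Injective i) (hqi : ∀ s, q (i s) = 1)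
    (hker : ∀ g, q g = 1 → ∃ s, i s = g) {n : ℕ} {ρ : Representation k K M} (u : H (funRep q ρ) n)
    (hu : ∀ x, map (isCompatible_proj hqi ρ x) n u = 0) : u = 0 := by
  induction n generalizing M with
  | zero =>
    refine eval₀_injective _ (funext fun x => ?_)
    rw [← LinearMap.proj_apply (R := k) x (eval₀ _ u), ← eval₀_map (isCompatible_proj hqi ρ x), hu]
    simp
  | succ n ih =>
    let E := isShortExact_funRep (MonoidHom.id K) ρ
    have hres (x : Γ) (t : H (funRep q (cokerRep (MonoidHom.id K) ρ)) n) :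
        map (isCompatible_proj hqi ρ x) (n + 1) ((E.funRep q).δ n t) =
          (E.comp i).δ n (map (isCompatible_proj hqi _ x) n t) :=
      (E.funRep q).map_δ (E.comp i) _ (isCompatible_proj hqi _ x) _ rfl rfl n t
    obtain ⟨t, rfl⟩ := ((E.funRep q).exact_δ_map n u).1
      ((isRelativelyInjective_funRep_funRep_id q ρ).eq_zero _)
    have ht (x : Γ) : ∃ w, map (E.comp i).compat_right n w = map (isCompatible_proj hqi _ x) n t :=
      ((E.comp i).exact_map_δ n _).1 ((hres x t).symm.trans (hu x))
    refine ((E.funRep q).exact_map_δ n t).2 ?_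
    cases n with
    | zero => exact exists_map_funMap_eq_of_forall_map_proj hqi hker E.compat_right _ _ t ht
    | succ n =>
      refine ⟨0, ?_⟩
      rw [map_zero, ih t fun x => ?_]
      obtain ⟨w, hw⟩ := ht x
      rw [← hw, (isRelativelyInjective_funRep_id_comp hi ρ).eq_zero w, map_zero]

theorem exists_shift_eq_of_res_eq_zero (hi : Function.Injective i) (hqi : ∀ s, q (i s) = 1)
    (hker : ∀ g, q g = 1 → ∃ s, i s = g) {n : ℕ} {ρ : Representation k K M} (c : H ρ (n + 1))
    (hc : res i (n + 1) c = 0) : ∃ z, shift q ρ n z = c :=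
  ((isShortExact_funRep q ρ).exact_δ_map n c).1 <|
    eq_zero_of_forall_map_proj_eq_zero hi hqi hker _ fun x => by
      rw [map_map _ _ (isCompatible_res ρ i) rfl rfl, hc]

end Shapiro

section Conjugation

variable {k : Type u} [CommRing k] {G K : Type u} [Group G] [Group K] {M N : Type u}
  [AddCommGroup M] [AddCommGroup N] [Module k M] [Module k N]

theorem isCompatible_conj (ρ : Representation k G M) (g : G) :
    IsCompatible ρ ρ (MulAut.conj g⁻¹).toMonoidHom (ρ g) := fun x u => by
  simp [← Module.End.mul_apply, ← map_mul, mul_assoc]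

theorem map_conj {ρ : Representation k G M} (g : G) {n : ℕ} (c : H ρ n) :
    map (isCompatible_conj ρ g) n c = c := by
  induction n generalizing M with
  | zero => exact eval₀_injective ρ (by rw [eval₀_map, apply_eval₀])
  | succ n ih =>
    let E := isShortExact_funRep (MonoidHom.id G) ρ
    obtain ⟨z, rfl⟩ := (E.exact_δ_map n c).1
      ((isRelativelyInjective_funRep (q := MonoidHom.id G) Function.injective_id ρ).eq_zero _)
    rw [E.map_δ E _ (isCompatible_conj _ g) (isCompatible_conj _ g) rfl rfl, ih]

theorem map_eq_map_of_conj {ρ : Representation k G M} {σ : Representation k K N} {f f' : K →* G}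
    {φ φ' : M →ₗ[k] N} (h : IsCompatible ρ σ f φ) (h' : IsCompatible ρ σ f' φ') (g : G)
    (hf : ∀ x, f' x = g⁻¹ * f x * g) (hφ : φ' = φ ∘ₗ ρ g) {n : ℕ} (c : H ρ n) :
    map h' n c = map h n c := by
  rw [← map_map (isCompatible_conj ρ g) h h' (MonoidHom.ext fun x => by simp [hf]) hφ, map_conj]

theorem map_proj_apply_eq_zero {S Γ : Type u} [Group S] [Group Γ] {q : K →* Γ} {i : S →* K}
    (hqi : ∀ s, q (i s) = 1) {g : K} (hg : ∀ s, Commute g (i s)) {ρ : Representation k K M} {n : ℕ}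
    {v : H (funRep q ρ) n} (hv : map (isCompatible_proj hqi ρ 1) n v = 0) :
    map (isCompatible_proj hqi ρ (q g)) n v = 0 := by
  have hρg : IsCompatible (ρ.comp i) (ρ.comp i) (MonoidHom.id S) (ρ g) := fun s m =>
    LinearMap.congr_fun (((hg s).map ρ).eq) m
  have hi : ∀ s, i s = (g⁻¹)⁻¹ * i s * g⁻¹ := fun s => by
    rw [inv_inv, (hg s).eq, mul_inv_cancel_right]
  have hproj : LinearMap.proj (q g) =
      (ρ g ∘ₗ (LinearMap.proj 1 : (Γ → M) →ₗ[k] M)) ∘ₗ funRep q ρ g⁻¹ := by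
    ext u
    simp [funRep_apply]
  rw [map_eq_map_of_conj ((isCompatible_proj hqi ρ 1).comp hρg) (isCompatible_proj hqi ρ (q g)) g⁻¹
    hi hproj v, ← map_comp (isCompatible_proj hqi ρ 1) hρg, hv, map_zero]

end Conjugation

section Filtration

variable {k : Type u} [CommRing k] {K L S Γ Δ : Type u} [Group K] [Group L] [Group S] [Group Γ]
  [Group Δ] {M N : Type u} [AddCommGroup M] [AddCommGroup N] [Module k M] [Module k N]
  {q : K →* Γ}

/-- The decreasing filtration of `Hⁿ(K; M)` by the degree over `Γ`, as in the
Lyndon–Hochschild–Serre spectral sequence of `q : K →* Γ`: its `(p + 1)`-st step consists of the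
connecting images of the `p`-th step for the cokernel of `M → (Γ → M)`. -/
noncomputable def fil (q : K →* Γ) : ∀ (_ n : ℕ) {M : Type u} [AddCommGroup M] [Module k M]
    (ρ : Representation k K M), Submodule k (H ρ n)
  | 0, _, _, _, _, _ => ⊤
  | _ + 1, 0, _, _, _, _ => ⊥
  | p + 1, n + 1, _, _, _, ρ => (fil q p n (cokerRep q ρ)).map (shift q ρ n)

theorem map_mem_fil {ρ : Representation k K M} {σ : Representation k L N} {f : L →* K}
    {φ : M →ₗ[k] N} (h : IsCompatible ρ σ f φ) {q' : L →* Δ} {e : Δ →* Γ}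
    (hq : q.comp f = e.comp q') {p n : ℕ} {y : H ρ n} (hy : y ∈ fil q p n ρ) :
    map h n y ∈ fil q' p n σ := by
  induction p generalizing n M N with
  | zero => exact Submodule.mem_top
  | succ p ih =>
    cases n with
    | zero =>
      rw [(Submodule.mem_bot k).1 hy, map_zero]
      exact zero_mem _
    | succ n =>
      obtain ⟨z, hz, rfl⟩ := hy
      rw [map_shift h hq]
      exact Submodule.mem_map_of_mem (ih (h.cokerMap hq) hz)

theorem eq_zero_of_mem_fil_of_lt {ρ : Representation k K M} {p n : ℕ} (hnp : n < p) {y : H ρ n}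
    (hy : y ∈ fil q p n ρ) : y = 0 := by
  induction p generalizing n M with
  | zero => omega
  | succ p ih =>
    cases n with
    | zero => exact (Submodule.mem_bot k).1 hy
    | succ n =>
      obtain ⟨z, hz, rfl⟩ := hy
      rw [ih (by omega) hz, map_zero]

theorem mem_fil_of_injective (hq : Function.Injective q) (ρ : Representation k K M) {p n : ℕ}
    (hpn : p ≤ n) (y : H ρ n) : y ∈ fil q p n ρ := by
  induction p generalizing n M with
  | zero => exact Submodule.mem_top
  | succ p ih =>
    cases n with
    | zero => omega
    | succ n =>
      obtain ⟨z, rfl⟩ := ((isShortExact_funRep q ρ).exact_δ_map n y).1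
        ((isRelativelyInjective_funRep hq ρ).eq_zero _)
      exact Submodule.mem_map_of_mem (ih _ (by omega) z)

variable (k Γ M) in
/-- The section of `(Γ → M) → Coker k Γ M` with values in the functions vanishing at `1`. -/
def cokerSection : Coker k Γ M →ₗ[k] Γ → M :=
  Submodule.liftQ _ (LinearMap.id - constMap k Γ M ∘ₗ LinearMap.proj 1) <| by
    rintro _ ⟨m, rfl⟩
    simp [constMap]

theorem mkQ_comp_cokerSection :
    Submodule.mkQ _ ∘ₗ cokerSection k Γ M = LinearMap.id := by
  refine Submodule.linearMap_qext _ (LinearMap.ext fun u => ?_)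
  simp [cokerSection]

theorem isCompatible_cokerSection {i : S →* K} (hqi : ∀ s, q (i s) = 1)
    (ρ : Representation k K M) :
    IsCompatible ((cokerRep q ρ).comp i) ((funRep q ρ).comp i) (MonoidHom.id S)
      (cokerSection k Γ M) := fun s u => by
  obtain ⟨u, rfl⟩ := Submodule.mkQ_surjective _ u
  ext x
  change ρ (i s) (u ((q (i s))⁻¹ * x)) - ρ (i s) (u ((q (i s))⁻¹ * 1)) =
    ρ (i s) (u ((q (i s))⁻¹ * x) - u 1)
  rw [hqi, inv_one, one_mul, one_mul, map_sub]

theorem res_eq_zero_of_mem_fil_succ {i : S →* K} (hqi : ∀ s, q (i s) = 1)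
    {ρ : Representation k K M} {p n : ℕ} {y : H ρ n} (hy : y ∈ fil q (p + 1) n ρ) :
    res i n y = 0 := by
  cases n with
  | zero => rw [(Submodule.mem_bot k).1 hy, map_zero]
  | succ n =>
    obtain ⟨z, -, rfl⟩ := hy
    let E := isShortExact_funRep q ρ
    rw [E.res_δ]
    refine ((E.comp i).exact_map_δ n _).2 ⟨map (isCompatible_cokerSection hqi ρ) n (res i n z), ?_⟩
    rw [map_map _ _ (isCompatible_id _) rfl mkQ_comp_cokerSection.symm, map_id]

end Filtration

section CohomologicallyTrivial

theorem exists_conj_inr_eq_diagonal (C : Type u) [Group C] :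
    ∃ (D : Type u) (_ : Group D) (μ : C × C →* D) (t : D),
      Function.Injective μ ∧ ∀ c, t * μ (1, c) * t⁻¹ = μ (c, c) := by
  let inr := MonoidHom.inr C C
  let diag := (MonoidHom.id C).prod (MonoidHom.id C)
  have hinr : Function.Injective inr := fun _ _ h => congrArg Prod.snd h
  have hdiag : Function.Injective diag := fun _ _ h => congrArg Prod.snd h
  let e : inr.range ≃* diag.range :=
    (MonoidHom.ofInjective hinr).symm.trans (MonoidHom.ofInjective hdiag)
  refine ⟨HNNExtension (C × C) inr.range diag.range e, inferInstance, HNNExtension.of,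
    HNNExtension.t, HNNExtension.of_injective _, fun c => mul_inv_eq_of_eq_mul ?_⟩
  have hec : e (MonoidHom.ofInjective hinr c) = MonoidHom.ofInjective hdiag c := by simp [e]
  have htc := HNNExtension.t_mul_of (φ := e) (MonoidHom.ofInjective hinr c)
  rwa [hec] at htc

variable {k : Type u} [CommRing k] {N C A B S Γ : Type u} [Group N] [Group C] [Group A] [Group B]
  [Group S] [Group Γ] {M : Type u} [AddCommGroup M] [Module k M]

theorem isCompatible_prodMap (ρ : Representation k A M) (f : N →* C) :
    IsCompatible (ρ.comp (MonoidHom.snd C A)) (ρ.comp (MonoidHom.snd N A))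
      (f.prodMap (MonoidHom.id A)) LinearMap.id := fun _ _ => rfl

variable (k) in
/-- In degrees `≤ J`, the homomorphism `f` induces the same map on cohomology as the trivial
homomorphism, even after taking the product with any group `A` and for any coefficients on which
only `A` acts. -/
def IsCohTrivial (f : N →* C) (J : ℕ) : Prop :=
  ∀ ⦃A : Type u⦄ [Group A] ⦃M : Type u⦄ [AddCommGroup M] [Module k M] (ρ : Representation k A M)
    ⦃n : ℕ⦄, n ≤ J → ∀ y : H (ρ.comp (MonoidHom.snd C A)) n,
      map (isCompatible_prodMap ρ f) n y = map (isCompatible_prodMap ρ (1 : N →* C)) n y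

theorem isCohTrivial_zero (f : N →* C) : IsCohTrivial k f 0 := by
  intro A _ M _ _ ρ n hn y
  obtain rfl : n = 0 := by omega
  exact eval₀_injective _ (by rw [eval₀_map, eval₀_map])

theorem IsCohTrivial.map_eq_of_res_eq_zero {f : N →* C} {J : ℕ} (hf : IsCohTrivial k f J)
    (ρ : Representation k B M) {q : B →* Γ} {i : S →* B} (hi : Function.Injective i)
    (hqi : ∀ s, q (i s) = 1) (hker : ∀ b, q b = 1 → ∃ s, i s = b) {n : ℕ} (hn : n ≤ J)
    (y : H (ρ.comp (MonoidHom.snd C B)) (n + 1))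
    (hy : res ((MonoidHom.id C).prodMap i) (n + 1) y = 0) :
    map (isCompatible_prodMap ρ f) (n + 1) y =
      map (isCompatible_prodMap ρ (1 : N →* C)) (n + 1) y := by
  obtain ⟨z, rfl⟩ := exists_shift_eq_of_res_eq_zero (q := q.comp (MonoidHom.snd C B))
    (Function.injective_id.prodMap hi) (fun s => hqi s.2)
    (fun b hb => (hker b.2 hb).imp' (Prod.mk b.1) fun s hs => Prod.ext rfl hs) y hy
  have map_z (g : N →* C) := map_shift (isCompatible_prodMap ρ g)
    (q := q.comp (MonoidHom.snd C B)) (q' := q.comp (MonoidHom.snd N B)) (e := MonoidHom.id Γ)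
    rfl n z
  simp only [cokerMap_id] at map_z
  rw [map_z, map_z]
  exact congrArg _ (hf (cokerRep q ρ) hn z)

/-- The class `y` minus its pullback along `C × C × A → C × 1 × A` dies on `C × 1 × A`, so `f` and
the trivial homomorphism agree on it when applied to the first factor `C` only. -/
theorem IsCohTrivial.map_prod_sub_eq {f : N →* C} {J : ℕ} (hf : IsCohTrivial k f J)
    (ρ : Representation k A M) {n : ℕ} (hn : n ≤ J)
    (y : H (ρ.comp (MonoidHom.snd (C × C) A)) (n + 1)) :
    map (isCompatible_prodMap ρ (f.prod f)) (n + 1) y -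
        map (isCompatible_prodMap ρ ((MonoidHom.inl C C).comp f)) (n + 1) y =
      map (isCompatible_prodMap ρ ((1 : N →* C).prod f)) (n + 1) y -
        map (isCompatible_prodMap ρ ((MonoidHom.inl C C).comp (1 : N →* C))) (n + 1) y := by
  let ρ' := ρ.comp (MonoidHom.snd C A)
  let ρ'' := ρ'.comp (MonoidHom.snd C (C × A))
  have hassoc : IsCompatible (ρ.comp (MonoidHom.snd (C × C) A)) ρ''
    MulEquiv.prodAssoc.symm.toMonoidHom LinearMap.id := fun _ _ => rfl
  have hpr : IsCompatible ρ' ρ'' ((MonoidHom.id C).prodMap (MonoidHom.snd C A)) LinearMap.id :=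
    fun _ _ => rfl
  have hι : IsCompatible ρ'' ρ' ((MonoidHom.id C).prodMap (MonoidHom.inr C A)) LinearMap.id :=
    fun _ _ => rfl
  have hgraph : IsCompatible (ρ'.comp (MonoidHom.snd N (C × A))) (ρ.comp (MonoidHom.snd N A))
    ((MonoidHom.fst N A).prod (f.prodMap (MonoidHom.id A))) LinearMap.id := fun _ _ => rfl
  let y' := map hassoc (n + 1) y
  let d := y' - map hpr (n + 1) (map hι (n + 1) y')
  have hd : res ((MonoidHom.id C).prodMap (MonoidHom.inr C A)) (n + 1) d = 0 := by
    rw [map_sub, sub_eq_zero]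
    simp only [map_comp]
    rfl
  have hsub (g : N →* C) : map (isCompatible_prodMap ρ (g.prod f)) (n + 1) y -
      map (isCompatible_prodMap ρ ((MonoidHom.inl C C).comp g)) (n + 1) y =
        map hgraph (n + 1) (map (isCompatible_prodMap ρ' g) (n + 1) d) := by
    simp only [d, y', map_sub, map_comp]
    rfl
  rw [hsub, hsub, hf.map_eq_of_res_eq_zero ρ' (q := MonoidHom.fst C A) (Prod.mk_right_injective 1)
    (fun _ => rfl) (fun b hb => ⟨b.2, Prod.ext hb.symm rfl⟩) hn d hd]

theorem IsCohTrivial.succ {f : N →* C} {J : ℕ} (hf : IsCohTrivial k f J) {D : Type u} [Group D]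
    {μ : C × C →* D} {t : D} (ht : ∀ c, t * μ (1, c) * t⁻¹ = μ (c, c)) :
    IsCohTrivial k ((μ.comp (MonoidHom.inl C C)).comp f) (J + 1) := by
  intro A _ M _ _ ρ n hn y
  cases n with
  | zero => exact eval₀_injective _ (by rw [eval₀_map, eval₀_map])
  | succ n =>
    have hconj : map (isCompatible_prodMap ρ (μ.comp (f.prod f))) (n + 1) y =
        map (isCompatible_prodMap ρ (μ.comp ((1 : N →* C).prod f))) (n + 1) y :=
      map_eq_map_of_conj _ _ (t⁻¹, 1) (fun x => Prod.ext (by simp [ht]) (by simp))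
        (by simp; rfl) y
    have hμ (g : N →* C × C) : map (isCompatible_prodMap ρ g) (n + 1)
        (map (isCompatible_prodMap ρ μ) (n + 1) y) =
          map (isCompatible_prodMap ρ (μ.comp g)) (n + 1) y :=
      map_comp _ _ _ _
    have hsub := hf.map_prod_sub_eq ρ (Nat.le_of_succ_le_succ hn)
      (map (isCompatible_prodMap ρ μ) (n + 1) y)
    rw [hμ, hμ, hμ, hμ, hconj] at hsub
    simpa using sub_right_inj.1 hsub

theorem exists_isCohTrivial (k : Type u) [CommRing k] (N : Type u) [Group N] (J : ℕ) :
    ∃ (C : Type u) (_ : Group C) (f : N →* C), Function.Injective f ∧ IsCohTrivial k f J := by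
  induction J with
  | zero => exact ⟨N, inferInstance, MonoidHom.id N, Function.injective_id, isCohTrivial_zero _⟩
  | succ J ih =>
    obtain ⟨C, _, f, hf, hfJ⟩ := ih
    obtain ⟨D, _, μ, t, hμ, ht⟩ := exists_conj_inr_eq_diagonal C
    exact ⟨D, inferInstance, _, (hμ.comp (Prod.mk_left_injective 1)).comp hf, hfJ.succ ht⟩

end CohomologicallyTrivial

section Amalgam

variable {S L₁ L₂ K A : Type u} [Group S] [Group L₁] [Group L₂] [Group K] [Group A]
  {i₁ : S →* L₁} {i₂ : S →* L₂} {ℓ₁ : L₁ →* K} {ℓ₂ : L₂ →* K}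

/-- `K` is the pushout of `L₁` and `L₂` over `S` in the category of groups. -/
structure IsAmalgam (i₁ : S →* L₁) (i₂ : S →* L₂) (ℓ₁ : L₁ →* K) (ℓ₂ : L₂ →* K) : Prop where
  comm : ℓ₁.comp i₁ = ℓ₂.comp i₂
  exists_lift : ∀ {T : Type u} [Group T] (a : L₁ →* T) (b : L₂ →* T), a.comp i₁ = b.comp i₂ →
    ∃ l : K →* T, l.comp ℓ₁ = a ∧ l.comp ℓ₂ = b
  hom_ext : ∀ {T : Type u} [Group T] {l l' : K →* T}, l.comp ℓ₁ = l'.comp ℓ₁ →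
    l.comp ℓ₂ = l'.comp ℓ₂ → l = l'

theorem exists_isAmalgam (h₁ : Function.Injective i₁) (h₂ : Function.Injective i₂) :
    ∃ (K : Type u) (_ : Group K) (ℓ₁ : L₁ →* K) (ℓ₂ : L₂ →* K),
      Function.Injective ℓ₁ ∧ Function.Injective ℓ₂ ∧ IsAmalgam i₁ i₂ ℓ₁ ℓ₂ := by
  let X : Bool → GrpCat.{u} := fun b => bif b then GrpCat.of L₂ else GrpCat.of L₁
  let φ : ∀ b, S →* X b := fun | false => i₁ | true => i₂
  have hφ : ∀ b, Function.Injective (φ b) := fun | false => h₁ | true => h₂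
  refine ⟨Monoid.PushoutI φ, inferInstance, Monoid.PushoutI.of (φ := φ) false,
    Monoid.PushoutI.of (φ := φ) true, Monoid.PushoutI.of_injective hφ false,
    Monoid.PushoutI.of_injective hφ true, ?_, ?_, ?_⟩
  · exact (Monoid.PushoutI.of_comp_eq_base false).trans
      (Monoid.PushoutI.of_comp_eq_base (φ := φ) true).symm
  · intro T _ a b hab
    let F : ∀ b, X b →* T := fun | false => a | true => b
    have hF (b : Bool) : (F b).comp (φ b) = a.comp i₁ := by
      cases b
      exacts [rfl, hab.symm]
    refine ⟨Monoid.PushoutI.lift F (a.comp i₁) hF, ?_, ?_⟩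
    · exact MonoidHom.ext fun x => Monoid.PushoutI.lift_of (φ := φ) F (a.comp i₁) hF (i := false) x
    · exact MonoidHom.ext fun x => Monoid.PushoutI.lift_of (φ := φ) F (a.comp i₁) hF (i := true) x
  · intro T _ l l' hl₁ hl₂
    exact Monoid.PushoutI.hom_ext_nonempty fun | false => hl₁ | true => hl₂

theorem IsAmalgam.commute (h : IsAmalgam i₁ i₂ ℓ₁ ℓ₂) {T : Type u} [Group T] {l : K →* T} {t : T}
    (h₁ : ∀ x, Commute (l (ℓ₁ x)) t) (h₂ : ∀ x, Commute (l (ℓ₂ x)) t) (x : K) :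
    Commute (l x) t := by
  have hl : (MulAut.conj t).toMonoidHom.comp l = l :=
    h.hom_ext (MonoidHom.ext fun x => (h₁ x).symm.mul_inv_cancel)
      (MonoidHom.ext fun x => (h₂ x).symm.mul_inv_cancel)
  exact (mul_inv_eq_iff_eq_mul.1 (DFunLike.congr_fun hl x)).symm

theorem monoidHom_prod_ext {T : Type u} [Group T] {l l' : K × A →* T}
    (hK : l.comp (MonoidHom.inl K A) = l'.comp (MonoidHom.inl K A))
    (hA : l.comp (MonoidHom.inr K A) = l'.comp (MonoidHom.inr K A)) : l = l' := by
  refine MonoidHom.ext fun x => ?_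
  rw [← Prod.fst_mul_snd x, map_mul, map_mul]
  exact congrArg₂ _ (DFunLike.congr_fun hK x.1) (DFunLike.congr_fun hA x.2)

theorem IsAmalgam.prodMap_id (h : IsAmalgam i₁ i₂ ℓ₁ ℓ₂) (A : Type u) [Group A] :
    IsAmalgam (i₁.prodMap (MonoidHom.id A)) (i₂.prodMap (MonoidHom.id A))
      (ℓ₁.prodMap (MonoidHom.id A)) (ℓ₂.prodMap (MonoidHom.id A)) where
  comm := MonoidHom.ext fun x => Prod.ext (DFunLike.congr_fun h.comm x.1) rfl
  exists_lift a b hab := by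
    obtain ⟨l, hla, hlb⟩ := h.exists_lift (a.comp (MonoidHom.inl _ A)) (b.comp (MonoidHom.inl _ A))
      (MonoidHom.ext fun s => DFunLike.congr_fun hab (s, 1))
    have hA (y : A) : a (1, y) = b (1, y) := by simpa using DFunLike.congr_fun hab (1, y)
    have hl (x : K) (y : A) : Commute (l x) (a.comp (MonoidHom.inr _ A) y) := by
      refine h.commute (fun x => ?_) (fun x => ?_) x
      · rw [← MonoidHom.comp_apply, hla]
        exact (MonoidHom.commute_inl_inr x y).map a
      · rw [← MonoidHom.comp_apply l, hlb, MonoidHom.comp_apply a, MonoidHom.inr_apply, hA]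
        exact (MonoidHom.commute_inl_inr x y).map b
    refine ⟨l.noncommCoprod _ hl, MonoidHom.ext fun x => ?_, MonoidHom.ext fun x => ?_⟩
    · change l (ℓ₁ x.1) * a (1, x.2) = a x
      rw [← MonoidHom.comp_apply l, hla]
      exact (map_mul a _ _).symm.trans (congrArg a (Prod.fst_mul_snd x))
    · change l (ℓ₂ x.1) * a (1, x.2) = b x
      rw [← MonoidHom.comp_apply l, hlb, hA]
      exact (map_mul b _ _).symm.trans (congrArg b (Prod.fst_mul_snd x))
  hom_ext {T _ l l'} h₁ h₂ := by
    have hK : l.comp (MonoidHom.inl K A) = l'.comp (MonoidHom.inl K A) :=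
      h.hom_ext (MonoidHom.ext fun x => DFunLike.congr_fun h₁ (x, 1))
        (MonoidHom.ext fun x => DFunLike.congr_fun h₂ (x, 1))
    have hA (y : A) : l (1, y) = l' (1, y) := by simpa using DFunLike.congr_fun h₁ (1, y)
    exact monoidHom_prod_ext hK (MonoidHom.ext hA)

end Amalgam

open groupCohomology

section CrossedHomomorphisms

variable {k : Type u} [CommRing k] {K L S L₁ L₂ Γ A : Type u} [Group K] [Group L] [Group S]
  [Group L₁] [Group L₂] [Group A] {M N : Type u} [AddCommGroup M] [AddCommGroup N]
  [Module k M] [Module k N]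

/-- The affine group of a representation `ρ` of `K` on `M`. The homomorphisms `L → Affine ρ` over
`f : L → K` correspond to the crossed homomorphisms `L → M`. -/
abbrev Affine (ρ : Representation k K M) : Type u :=
  Multiplicative M ⋊[(MulAutMultiplicative M).symm.toMonoidHom.comp
    ((DistribMulAction.toAddAut (Module.End k M)ˣ M).comp ρ.asGroupHom)] K

/-- The homomorphism into the affine group given by a crossed homomorphism. -/
def affineHom {ρ : Representation k K M} (f : L →* K) (c : cocycles₁ (Rep.of (ρ.comp f))) :
    L →* Affine ρ where
  toFun x := ⟨Multiplicative.ofAdd (c x), f x⟩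
  map_one' := SemidirectProduct.ext (congrArg Multiplicative.ofAdd (cocycles₁_map_one c))
    f.map_one
  map_mul' x y := SemidirectProduct.ext
    (congrArg Multiplicative.ofAdd (((mem_cocycles₁_iff _).1 c.2 x y).trans (add_comm _ _)))
    (f.map_mul x y)

theorem exists_cocycles₁_of_affineHom {ρ : Representation k K M} (l : K →* Affine ρ)
    (hl : SemidirectProduct.rightHom.comp l = MonoidHom.id K) :
    ∃ c : cocycles₁ (Rep.of ρ), ∀ x, c x = (l x).left.toAdd := by
  refine ⟨⟨fun x => (l x).left.toAdd, (mem_cocycles₁_iff _).2 fun x y => ?_⟩, fun _ => rfl⟩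
  have hx : (l x).right = x := DFunLike.congr_fun hl x
  rw [map_mul, SemidirectProduct.mul_left, hx]
  exact add_comm _ _

theorem IsAmalgam.exists_cocycles₁ {i₁ : S →* L₁} {i₂ : S →* L₂} {ℓ₁ : L₁ →* K} {ℓ₂ : L₂ →* K}
    (h : IsAmalgam i₁ i₂ ℓ₁ ℓ₂) {ρ : Representation k K M} (c₁ : cocycles₁ (Rep.of (ρ.comp ℓ₁)))
    (c₂ : cocycles₁ (Rep.of (ρ.comp ℓ₂))) (hc : ∀ s, c₁ (i₁ s) = c₂ (i₂ s)) :
    ∃ c : cocycles₁ (Rep.of ρ), (∀ x, c (ℓ₁ x) = c₁ x) ∧ ∀ x, c (ℓ₂ x) = c₂ x := by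
  obtain ⟨l, hl₁, hl₂⟩ := h.exists_lift (affineHom ℓ₁ c₁) (affineHom ℓ₂ c₂) <|
    MonoidHom.ext fun s => SemidirectProduct.ext (congrArg Multiplicative.ofAdd (hc s))
      (DFunLike.congr_fun h.comm s)
  obtain ⟨c, hcl⟩ := exists_cocycles₁_of_affineHom l <| h.hom_ext
    (by rw [MonoidHom.comp_assoc, hl₁]; rfl) (by rw [MonoidHom.comp_assoc, hl₂]; rfl)
  refine ⟨c, fun x => ?_, fun x => ?_⟩
  · rw [hcl, ← MonoidHom.comp_apply l, hl₁]
    rfl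
  · rw [hcl, ← MonoidHom.comp_apply l, hl₂]
    rfl

theorem IsAmalgam.cocycles₁_ext {i₁ : S →* L₁} {i₂ : S →* L₂} {ℓ₁ : L₁ →* K} {ℓ₂ : L₂ →* K}
    (h : IsAmalgam i₁ i₂ ℓ₁ ℓ₂) {ρ : Representation k K M} {c c' : cocycles₁ (Rep.of ρ)}
    (h₁ : ∀ x, c (ℓ₁ x) = c' (ℓ₁ x)) (h₂ : ∀ x, c (ℓ₂ x) = c' (ℓ₂ x)) : c = c' := by
  have hcc' : affineHom (ρ := ρ) (MonoidHom.id K) c = affineHom (MonoidHom.id K) c' := h.hom_ext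
    (MonoidHom.ext fun x => SemidirectProduct.ext (congrArg Multiplicative.ofAdd (h₁ x)) rfl)
    (MonoidHom.ext fun x => SemidirectProduct.ext (congrArg Multiplicative.ofAdd (h₂ x)) rfl)
  exact groupCohomology.cocycles₁_ext fun x => congrArg (fun l => (l x).left.toAdd) hcc'

theorem exists_cocycles₁_freeGroup_prod {ρ : Representation k (FreeGroup Γ × A) M} (v : Γ → M)
    (hv : ∀ γ a, ρ (1, a) (v γ) = v γ) :
    ∃ c : cocycles₁ (Rep.of ρ), (∀ γ, c (FreeGroup.of γ, 1) = v γ) ∧ ∀ a, c (1, a) = 0 := by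
  let l : FreeGroup Γ →* Affine ρ :=
    FreeGroup.lift fun γ => ⟨Multiplicative.ofAdd (v γ), (FreeGroup.of γ, 1)⟩
  let r : A →* Affine ρ := SemidirectProduct.inr.comp (MonoidHom.inr _ A)
  have hl (γ : Γ) : l (FreeGroup.of γ) = ⟨Multiplicative.ofAdd (v γ), (FreeGroup.of γ, 1)⟩ :=
    FreeGroup.lift_apply_of
  have hconj (a : A) : (MulAut.conj (r a)).toMonoidHom.comp l = l := by
    refine FreeGroup.ext_hom _ _ fun γ => mul_inv_eq_of_eq_mul ?_
    rw [hl]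
    refine SemidirectProduct.ext (congrArg Multiplicative.ofAdd ?_) <|
      Prod.ext ((one_mul _).trans (mul_one _).symm) ((mul_one _).trans (one_mul _).symm)
    change 0 + ρ (1, a) (v γ) = v γ + ρ (FreeGroup.of γ, 1) 0
    rw [hv, map_zero, add_comm]
  have hlr (x : FreeGroup Γ) (a : A) : Commute (l x) (r a) :=
    (mul_inv_eq_iff_eq_mul.1 (DFunLike.congr_fun (hconj a) x)).symm
  have hright : SemidirectProduct.rightHom.comp l = MonoidHom.inl (FreeGroup Γ) A :=
    FreeGroup.ext_hom _ _ fun γ => by rw [MonoidHom.comp_apply, hl]; rfl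
  obtain ⟨c, hc⟩ := exists_cocycles₁_of_affineHom (l.noncommCoprod r hlr) <|
    MonoidHom.ext fun x => by
      change (l x.1 * r x.2).right = x
      rw [SemidirectProduct.mul_right]
      exact (congrArg (· * _) (DFunLike.congr_fun hright x.1)).trans (Prod.fst_mul_snd x)
  refine ⟨c, fun γ => ?_, fun a => ?_⟩
  · rw [hc, MonoidHom.noncommCoprod_apply, hl, map_one, mul_one, toAdd_ofAdd]
  · rw [hc, MonoidHom.noncommCoprod_apply, map_one, one_mul]
    rfl

theorem cocycles₁_freeGroup_prod_ext {ρ : Representation k (FreeGroup Γ × A) M}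
    {c c' : cocycles₁ (Rep.of ρ)} (hΓ : ∀ γ, c (FreeGroup.of γ, 1) = c' (FreeGroup.of γ, 1))
    (hA : ∀ a, c (1, a) = c' (1, a)) : c = c' := by
  have hcc' : affineHom (ρ := ρ) (MonoidHom.id _) c = affineHom (MonoidHom.id _) c' :=
    monoidHom_prod_ext
      (FreeGroup.ext_hom _ _ fun γ =>
        SemidirectProduct.ext (congrArg Multiplicative.ofAdd (hΓ γ)) rfl)
      (MonoidHom.ext fun a => SemidirectProduct.ext (congrArg Multiplicative.ofAdd (hA a)) rfl)
  exact cocycles₁_ext fun x => congrArg (fun l => (l x).left.toAdd) hcc'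

theorem map_H1π_eq {ρ : Representation k K M} {σ : Representation k L N} {f : L →* K}
    {φ : M →ₗ[k] N} (h : IsCompatible ρ σ f φ) {c : cocycles₁ (Rep.of ρ)}
    {d : cocycles₁ (Rep.of σ)} (hcd : ∀ x, φ (c (f x)) = d x) :
    map h 1 (H1π (Rep.of ρ) c) = H1π (Rep.of σ) d := by
  refine (H1π_comp_map_apply f (A := Rep.of ρ) (B := Rep.of σ) _ c).trans ?_
  exact congrArg _ (cocycles₁_ext hcd)

theorem exists_coboundary_of_res_eq_zero {ρ : Representation k K M} (f : L →* K)
    {c : cocycles₁ (Rep.of ρ)} (hc : res f 1 (H1π (Rep.of ρ) c) = 0) :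
    ∃ m : M, ∀ x, c (f x) = ρ (f x) m - m := by
  let d := mapCocycles₁ (A := Rep.of ρ) (B := Rep.of (ρ.comp f)) f (𝟙 _) c
  rw [map_H1π_eq (isCompatible_res ρ f) (d := d) fun _ => rfl, H1π_eq_zero_iff] at hc
  obtain ⟨m, hm⟩ := hc
  exact ⟨m, fun x => (congrFun hm x).symm⟩

theorem exists_H1π_eq_of_res_eq_zero {ρ : Representation k K M} (f : L →* K) {z : H ρ 1}
    (hz : res f 1 z = 0) :
    ∃ c : cocycles₁ (Rep.of ρ), H1π (Rep.of ρ) c = z ∧ ∀ x, c (f x) = 0 := by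
  obtain ⟨c, rfl⟩ : ∃ c, H1π (Rep.of ρ) c = z := H1_induction_on z fun c => ⟨c, rfl⟩
  obtain ⟨m, hm⟩ := exists_coboundary_of_res_eq_zero f hz
  let b : cocycles₁ (Rep.of ρ) := ⟨d₀₁ (Rep.of ρ) m, d₀₁_apply_mem_cocycles₁ (A := Rep.of ρ) m⟩
  have hb : H1π (Rep.of ρ) b = 0 := (H1π_eq_zero_iff b).2 ⟨m, rfl⟩
  exact ⟨c - b, by rw [map_sub, hb, sub_zero], fun x => sub_eq_zero.2 (hm x)⟩

end CrossedHomomorphisms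

section SplitLifting

variable {k : Type u} [CommRing k] {K S L₁ L₂ Γ A : Type u} [Group K] [Group S] [Group L₁]
  [Group L₂] [Group A] {M N : Type u} [AddCommGroup M] [AddCommGroup N] [Module k M] [Module k N]

variable (k) in
/-- Along every surjection of `K`-modules with an `S`-equivariant section (for `j : S →* K`), the
classes in `Hⁿ(K; -)` killed by restriction along both `ℓ₁` and `ℓ₂` can be lifted. -/
def HasSplitLifting (j : S →* K) (ℓ₁ : L₁ →* K) (ℓ₂ : L₂ →* K) (n : ℕ) : Prop :=
  ∀ ⦃M N : Type u⦄ [AddCommGroup M] [AddCommGroup N] [Module k M] [Module k N]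
    ⦃ρ : Representation k K M⦄ ⦃σ : Representation k K N⦄ ⦃π : M →ₗ[k] N⦄ ⦃s : N →ₗ[k] M⦄
    (hπ : IsCompatible ρ σ (MonoidHom.id K) π),
    IsCompatible (σ.comp j) (ρ.comp j) (MonoidHom.id S) s → π ∘ₗ s = LinearMap.id →
    ∀ z : H σ n, res ℓ₁ n z = 0 → res ℓ₂ n z = 0 → ∃ w, map hπ n w = z

/-- The image of a crossed homomorphism under a map of representations. -/
noncomputable def pushCocycle {ρ : Representation k K M} {σ : Representation k K N}
    {π : M →ₗ[k] N} (hπ : IsCompatible ρ σ (MonoidHom.id K) π) (c : cocycles₁ (Rep.of ρ)) :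
    cocycles₁ (Rep.of σ) :=
  mapCocycles₁ (A := Rep.of ρ) (B := Rep.of σ) (MonoidHom.id K)
    (Rep.ofHom ⟨π, fun x => LinearMap.ext (hπ x)⟩) c

theorem pushCocycle_apply {ρ : Representation k K M} {σ : Representation k K N}
    {π : M →ₗ[k] N} (hπ : IsCompatible ρ σ (MonoidHom.id K) π) (c : cocycles₁ (Rep.of ρ)) (x : K) :
    pushCocycle hπ c x = π (c x) := rfl

theorem IsAmalgam.hasSplitLifting_one {i₁ : S →* L₁} {i₂ : S →* L₂} {ℓ₁ : L₁ →* K} {ℓ₂ : L₂ →* K}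
    (h : IsAmalgam i₁ i₂ ℓ₁ ℓ₂) : HasSplitLifting k (ℓ₁.comp i₁) ℓ₁ ℓ₂ 1 := by
  intro M N _ _ _ _ ρ σ π s hπ hs hπs z hz₁ hz₂
  obtain ⟨c, rfl, hc₁⟩ := exists_H1π_eq_of_res_eq_zero ℓ₁ hz₁
  obtain ⟨m, hc₂⟩ := exists_coboundary_of_res_eq_zero ℓ₂ hz₂
  have hi (t : S) : ℓ₁ (i₁ t) = ℓ₂ (i₂ t) := DFunLike.congr_fun h.comm t
  have hm (t : S) : σ (ℓ₁ (i₁ t)) m = m := by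
    rw [← sub_eq_zero, hi, ← hc₂, ← hi, hc₁]
  have hsm (t : S) : ρ (ℓ₂ (i₂ t)) (s m) - s m = 0 := by
    rw [← hi, sub_eq_zero]
    exact (hs t m).symm.trans (congrArg s (hm t))
  let b : cocycles₁ (Rep.of (ρ.comp ℓ₂)) :=
    ⟨d₀₁ (Rep.of (ρ.comp ℓ₂)) (s m), d₀₁_apply_mem_cocycles₁ (A := Rep.of (ρ.comp ℓ₂)) (s m)⟩
  obtain ⟨d, hd₁, hd₂⟩ := h.exists_cocycles₁ 0 b fun t => (hsm t).symm
  have hdc : pushCocycle hπ d = c := by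
    refine h.cocycles₁_ext (fun x => ?_) fun x => ?_
    · rw [pushCocycle_apply, hd₁, hc₁]
      exact map_zero π
    · have hπsm : π (s m) = m := LinearMap.congr_fun hπs m
      rw [pushCocycle_apply, hd₂, hc₂]
      refine (map_sub π _ _).trans ?_
      rw [hπsm]
      exact congrArg (· - m) ((hπ _ _).trans (congrArg _ hπsm))
  exact ⟨H1π _ d, map_H1π_eq hπ (DFunLike.congr_fun hdc)⟩

theorem hasSplitLifting_freeGroup_one :
    HasSplitLifting k (MonoidHom.inr (FreeGroup Γ) A) (MonoidHom.inr (FreeGroup Γ) A)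
      (MonoidHom.inr (FreeGroup Γ) A) 1 := by
  intro M N _ _ _ _ ρ σ π s hπ hs hπs z hz _
  obtain ⟨c, rfl, hc⟩ := exists_H1π_eq_of_res_eq_zero _ hz
  have hinv (γ : Γ) (a : A) : σ (1, a) (c (FreeGroup.of γ, 1)) = c (FreeGroup.of γ, 1) := by
    have hca : c.1 (1, a) = 0 := hc a
    have h₁ := (mem_cocycles₁_iff _).1 c.2 (1, a) (FreeGroup.of γ, 1)
    have h₂ := (mem_cocycles₁_iff _).1 c.2 (FreeGroup.of γ, 1) (1, a)
    rw [hca, add_zero] at h₁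
    rw [hca, map_zero, zero_add] at h₂
    rw [Prod.mk_mul_mk, one_mul, mul_one] at h₁ h₂
    exact h₁.symm.trans h₂
  obtain ⟨d, hdΓ, hdA⟩ := exists_cocycles₁_freeGroup_prod (ρ := ρ)
    (fun γ => s (c (FreeGroup.of γ, 1))) fun γ a =>
      (hs a _).symm.trans (congrArg s (hinv γ a))
  have hdc : pushCocycle hπ d = c := by
    refine cocycles₁_freeGroup_prod_ext (fun γ => ?_) fun a => ?_
    · rw [pushCocycle_apply, hdΓ]
      exact LinearMap.congr_fun hπs _
    · rw [pushCocycle_apply, hdA, map_zero]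
      exact (hc a).symm
  exact ⟨H1π _ d, map_H1π_eq hπ (DFunLike.congr_fun hdc)⟩

theorem hasSplitLifting_zero {j : S →* K} {ℓ₁ : L₁ →* K} {ℓ₂ : L₂ →* K} :
    HasSplitLifting k j ℓ₁ ℓ₂ 0 := by
  intro M N _ _ _ _ ρ σ π s hπ _ _ z hz _
  refine ⟨0, ?_⟩
  rw [map_zero, ← map_zero_injective (isCompatible_res σ ℓ₁) Function.injective_id
    (hz.trans (map_zero _).symm)]

theorem HasSplitLifting.of_one {j : S →* K} {ℓ₁ : L₁ →* K} {ℓ₂ : L₂ →* K}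
    (h : HasSplitLifting k j ℓ₁ ℓ₂ 1) (h₁ : Function.Injective ℓ₁) (h₂ : Function.Injective ℓ₂)
    (n : ℕ) : HasSplitLifting k j ℓ₁ ℓ₂ n := by
  induction n with
  | zero => exact hasSplitLifting_zero
  | succ n ih =>
    cases n with
    | zero => exact h
    | succ n =>
      intro M N _ _ _ _ ρ σ π s hπ hs hπs z hz₁ hz₂
      let E := isShortExact_funRep (MonoidHom.id K) σ
      obtain ⟨z', rfl⟩ := (E.exact_δ_map (n + 1) z).1
        ((isRelativelyInjective_funRep (q := MonoidHom.id K) Function.injective_id σ).eq_zero _)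
      have hres {L : Type u} [Group L] {ℓ : L →* K} (hℓ : Function.Injective ℓ)
          (hz : res ℓ (n + 2) (E.δ (n + 1) z') = 0) : res ℓ (n + 1) z' = 0 := by
        rw [E.res_δ] at hz
        obtain ⟨w, hw⟩ := ((E.comp ℓ).exact_map_δ (n + 1) _).1 hz
        rw [← hw, (isRelativelyInjective_funRep_id_comp hℓ σ).eq_zero w, map_zero]
      have hcoker : cokerMap (MonoidHom.id K) π ∘ₗ cokerMap (MonoidHom.id K) s = LinearMap.id :=
        Submodule.linearMap_qext _ <| LinearMap.ext fun v => congrArg (Submodule.mkQ _) <|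
          funext fun x => LinearMap.congr_fun hπs (v x)
      obtain ⟨w, rfl⟩ := ih (hπ.cokerMap (q := MonoidHom.id K) rfl) (hs.cokerMap (q := j) rfl)
        hcoker z' (hres h₁ hz₁) (hres h₂ hz₂)
      exact ⟨shift _ ρ _ w, map_shift hπ rfl (n + 1) w⟩

end SplitLifting

section Skeleton

variable {k : Type u} [CommRing k] {S K L L₁ L₂ G G' Γ A : Type u} [Group S] [Group K] [Group L]
  [Group L₁] [Group L₂] [Group G] [Group G'] [Group Γ] [Group A] {M U V W : Type u}
  [AddCommGroup M] [AddCommGroup U] [AddCommGroup V] [AddCommGroup W] [Module k M] [Module k U]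
  [Module k V] [Module k W]

theorem res_zero_eq_zero_iff_mem_fil_succ (f : L →* K) (q : K →* Γ) {ρ : Representation k K M}
    {p : ℕ} (y : H ρ 0) : res f 0 y = 0 ↔ y ∈ fil q (p + 1) 0 ρ :=
  (map_eq_zero_iff _ (map_zero_injective _ Function.injective_id)).trans (Submodule.mem_bot k).symm

theorem HasSplitLifting.δ_eq_zero {j : S →* L} {ℓ₁ : L₁ →* L} {ℓ₂ : L₂ →* L} {n : ℕ}
    (h : HasSplitLifting k j ℓ₁ ℓ₂ n) {ρ : Representation k L U} {σ : Representation k L V}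
    {τ : Representation k L W} {i : U →ₗ[k] V} {p : V →ₗ[k] W} {s : W →ₗ[k] V}
    (E : IsShortExact ρ σ τ i p) (hs : IsCompatible (τ.comp j) (σ.comp j) (MonoidHom.id S) s)
    (hps : p ∘ₗ s = LinearMap.id) {z : H τ n} (h₁ : res ℓ₁ n z = 0) (h₂ : res ℓ₂ n z = 0) :
    E.δ n z = 0 :=
  (E.exact_map_δ n z).2 (h E.compat_right hs hps z h₁ h₂)

theorem HasSplitLifting.res_shift_eq_zero {j : S →* L} {ℓ₁ : L₁ →* L} {ℓ₂ : L₂ →* L} {n : ℕ}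
    (h : HasSplitLifting k j ℓ₁ ℓ₂ n) {f : L →* K} {q : K →* Γ} (hqj : ∀ s, q (f (j s)) = 1)
    {ρ : Representation k K M} {z : H (cokerRep q ρ) n} (h₁ : res ℓ₁ n (res f n z) = 0)
    (h₂ : res ℓ₂ n (res f n z) = 0) : res f (n + 1) (shift q ρ n z) = 0 := by
  let E := isShortExact_funRep q ρ
  have hs : IsCompatible (((cokerRep q ρ).comp f).comp j) (((funRep q ρ).comp f).comp j)
      (MonoidHom.id S) (cokerSection k Γ M) := isCompatible_cokerSection (i := f.comp j) hqj ρ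
  exact (E.res_δ f n z).trans (h.δ_eq_zero (E.comp f) hs mkQ_comp_cokerSection h₁ h₂)

variable (k) in
/-- `f : G →* Γ` behaves like the inclusion of the `(p - 1)`-skeleton of a classifying space of
`Γ`: in degrees `≤ J`, the classes on `Γ × A` killed by `f × id` are those of filtration `≥ p`
over `Γ`, for every group `A` and all coefficients. -/
def IsSkeleton (f : G →* Γ) (p J : ℕ) : Prop :=
  ∀ ⦃A : Type u⦄ [Group A] ⦃M : Type u⦄ [AddCommGroup M] [Module k M]
    ⦃ρ : Representation k (Γ × A) M⦄ ⦃n : ℕ⦄, n ≤ J → ∀ y : H ρ n,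
      res (f.prodMap (MonoidHom.id A)) n y = 0 ↔ y ∈ fil (MonoidHom.fst Γ A) p n ρ

theorem eq_zero_of_map_proj_one_eq_zero {q : G →* Γ} (hq : Function.Surjective q)
    (ρ : Representation k (G × A) M) {n : ℕ} (v : H (funRep (q.comp (MonoidHom.fst G A)) ρ) n)
    (hv : map (isCompatible_proj (q := q.comp (MonoidHom.fst G A)) (i := MonoidHom.inr G A)
      (fun _ => map_one q) ρ 1) n v = 0) :
    res (MonoidHom.inr G A) n v = 0 := by
  let q' := q.comp (MonoidHom.fst G A)
  have hq' (a : A) : q' (MonoidHom.inr G A a) = 1 := map_one q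
  refine eq_zero_of_forall_map_proj_eq_zero (q := q'.comp (MonoidHom.inr G A))
    (i := MonoidHom.id A) (ρ := ρ.comp (MonoidHom.inr G A)) Function.injective_id hq'
    (fun a _ => ⟨a, rfl⟩) _ fun x => ?_
  obtain ⟨g, rfl⟩ := hq x
  exact (map_map _ _ (isCompatible_proj hq' ρ (q g)) rfl rfl n v).trans <|
    map_proj_apply_eq_zero hq' (g := (g, 1)) (MonoidHom.commute_inl_inr g) hv

theorem isSkeleton_one [Subsingleton G] (f : G →* Γ) (J : ℕ) : IsSkeleton k f 1 J := by
  intro A _ M _ _ ρ n _ y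
  have hf (s : G × A) : f s.1 = 1 := by rw [Subsingleton.elim s.1 1, map_one]
  refine ⟨fun hy => ?_, res_eq_zero_of_mem_fil_succ hf⟩
  cases n with
  | zero => exact (res_zero_eq_zero_iff_mem_fil_succ _ _ y).1 hy
  | succ n =>
    obtain ⟨z, rfl⟩ := exists_shift_eq_of_res_eq_zero (q := MonoidHom.fst Γ A)
      ((Function.injective_of_subsingleton f).prodMap Function.injective_id) hf
      (fun x hx => ⟨(1, x.2), Prod.ext ((map_one f).trans hx.symm) rfl⟩) y hy
    exact Submodule.mem_map_of_mem Submodule.mem_top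

theorem isCompatible_pi_apply (ρ : Representation k (Γ × A) M) (f : G →* Γ) :
    IsCompatible ((ρ.comp (f.prodMap (MonoidHom.id A))).comp (MonoidHom.inr G A))
      (funRep (MonoidHom.fst Γ A) ρ) (MonoidHom.snd Γ A) (LinearMap.pi fun x => ρ (x, 1)) :=
  fun x m => by
    ext y
    have hx : x * (x.1⁻¹ * y, 1) = (y, x.2) := Prod.ext (mul_inv_cancel_left _ _) (mul_one _)
    simp [funRep_apply, ← Module.End.mul_apply, ← map_mul, hx]

theorem exists_res_inr_sub_eq_zero {f : G →* Γ} (hf : Function.Surjective f)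
    {ρ : Representation k (Γ × A) M} {n : ℕ}
    (v : H ((funRep (MonoidHom.fst Γ A) ρ).comp (f.prodMap (MonoidHom.id A))) n) :
    ∃ w : H (funRep (MonoidHom.fst Γ A) ρ) n,
      res (MonoidHom.inr G A) n (v - res (f.prodMap (MonoidHom.id A)) n w) = 0 := by
  let ρ' := ρ.comp (f.prodMap (MonoidHom.id A))
  have hproj : IsCompatible ((funRep (MonoidHom.fst Γ A) ρ).comp (f.prodMap (MonoidHom.id A)))
      (ρ'.comp (MonoidHom.inr G A)) (MonoidHom.inr G A) (LinearMap.proj 1) :=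
    isCompatible_proj (q := f.comp (MonoidHom.fst G A)) (fun _ => map_one f) ρ' 1
  have hpi := isCompatible_pi_apply ρ f
  let w := map hpi n (map hproj n v)
  have hw : map hproj n (res (f.prodMap (MonoidHom.id A)) n w) = map hproj n v := by
    have hres := isCompatible_res (funRep (MonoidHom.fst Γ A) ρ) (f.prodMap (MonoidHom.id A))
    refine (map_comp hres hproj n w).trans <|
      (map_map hpi (hres.comp hproj) (isCompatible_id _) rfl ?_ n _).trans (map_id n _)
    exact LinearMap.ext fun m => (LinearMap.congr_fun (map_one ρ) m).symm
  refine ⟨w, eq_zero_of_map_proj_one_eq_zero hf ρ' _ ?_⟩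
  exact (map_sub (map hproj n) v _).trans (sub_eq_zero.2 hw.symm)

variable (k) in
/-- In degrees `≤ J`, the classes on `G' × A` with coefficients in functions on `Γ` vanish on
`G × A` as soon as they vanish on `A`. -/
def VanishesOnFunctions (f : G' →* Γ) (g : G →* G') (J : ℕ) : Prop :=
  ∀ ⦃A : Type u⦄ [Group A] ⦃M : Type u⦄ [AddCommGroup M] [Module k M]
    ⦃ρ : Representation k (Γ × A) M⦄ ⦃n : ℕ⦄, n ≤ J →
    ∀ v : H ((funRep (MonoidHom.fst Γ A) ρ).comp (f.prodMap (MonoidHom.id A))) n,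
      res (MonoidHom.inr G' A) n v = 0 → res (g.prodMap (MonoidHom.id A)) n v = 0

theorem mem_fil_succ_of_res_eq_zero {g : G →* G'} {f : G' →* Γ} {p J : ℕ}
    (hfg : IsSkeleton k (f.comp g) p J) (hf : Function.Surjective f)
    (hfun : VanishesOnFunctions k f g J) {ρ : Representation k (Γ × A) M} {n : ℕ} (hn : n ≤ J)
    {y : H ρ (n + 1)} (hy : res (f.prodMap (MonoidHom.id A)) (n + 1) y = 0) :
    y ∈ fil (MonoidHom.fst Γ A) (p + 1) (n + 1) ρ := by
  let fA := f.prodMap (MonoidHom.id A)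
  let gA := g.prodMap (MonoidHom.id A)
  let E := isShortExact_funRep (MonoidHom.fst Γ A) ρ
  have hinr : MonoidHom.inr Γ A = fA.comp (MonoidHom.inr G' A) :=
    MonoidHom.ext fun _ => Prod.ext (map_one f).symm rfl
  have hyA : res (MonoidHom.inr Γ A) (n + 1) y = 0 :=
    map_eq_zero_of_res_eq_zero (isCompatible_res ρ (MonoidHom.inr Γ A)) hinr hy
  obtain ⟨z, rfl⟩ := exists_shift_eq_of_res_eq_zero (q := MonoidHom.fst Γ A)
    (Prod.mk_right_injective 1) (fun _ => rfl) (fun x hx => ⟨x.2, Prod.ext hx.symm rfl⟩) y hyA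
  obtain ⟨v, hv⟩ : ∃ v, map (E.comp fA).compat_right n v = res fA n z :=
    ((E.comp fA).exact_map_δ n _).1 ((E.res_δ fA n z).symm.trans hy)
  obtain ⟨w, hw⟩ := exists_res_inr_sub_eq_zero hf v
  have hvw : map (E.comp fA).compat_right n (v - res fA n w) =
      res fA n (z - map E.compat_right n w) := by
    rw [map_sub, map_sub, hv, map_comp, map_comp]
  have hz : shift _ ρ n (z - map E.compat_right n w) = shift _ ρ n z := by
    rw [map_sub, (E.exact_map_δ n).apply_apply_eq_zero, sub_zero]
  rw [← hz]
  refine Submodule.mem_map_of_mem ((hfg hn _).1 ?_)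
  refine (map_comp (isCompatible_res _ fA) (isCompatible_res _ gA) n _).symm.trans ?_
  have hgv : res gA n (v - res fA n w) = 0 := hfun hn _ hw
  rw [← hvw, map_comp, ← map_map (isCompatible_res _ gA) ((E.comp fA).comp gA).compat_right _ rfl
    rfl, hgv]
  exact map_zero _

theorem IsSkeleton.succ {g : G →* G'} {f : G' →* Γ} {p J : ℕ}
    (hfg : IsSkeleton k (f.comp g) p J) (hf : Function.Surjective f)
    (hfun : VanishesOnFunctions k f g J)
    (hshift : ∀ {A : Type u} [Group A] {M : Type u} [AddCommGroup M] [Module k M]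
      {ρ : Representation k (Γ × A) M} {n : ℕ}, n ≤ J →
      ∀ z ∈ fil (MonoidHom.fst Γ A) p n (cokerRep (MonoidHom.fst Γ A) ρ),
        res (f.prodMap (MonoidHom.id A)) (n + 1) (shift (MonoidHom.fst Γ A) ρ n z) = 0) :
    IsSkeleton k f (p + 1) J := by
  intro A _ M _ _ ρ n hn y
  cases n with
  | zero => exact res_zero_eq_zero_iff_mem_fil_succ _ _ y
  | succ n =>
    refine ⟨mem_fil_succ_of_res_eq_zero hfg hf hfun (by omega), ?_⟩
    rintro ⟨z, hz, rfl⟩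
    exact hshift (by omega) z hz

end Skeleton

section Construction

variable {k : Type u} [CommRing k] {G C P Γ : Type u} [Group G] [Group C] [Group P] [Group Γ]

theorem isSkeleton_freeGroup_lift (J : ℕ) :
    IsSkeleton k (FreeGroup.lift (id : Γ → Γ)) 2 J := by
  let f := FreeGroup.lift (id : Γ → Γ)
  have hf : Function.Surjective f := fun x => ⟨FreeGroup.of x, FreeGroup.lift_apply_of⟩
  have h₁ : IsSkeleton k (f.comp (1 : PUnit.{u + 1} →* FreeGroup Γ)) 1 J := isSkeleton_one _ J
  refine h₁.succ hf ?_ ?_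
  · intro A _ M _ _ ρ n _ v hv
    have hone : (1 : PUnit.{u + 1} →* FreeGroup Γ).prodMap (MonoidHom.id A) =
        (MonoidHom.inr (FreeGroup Γ) A).comp (MonoidHom.snd _ A) := rfl
    exact map_eq_zero_of_res_eq_zero (isCompatible_res _ _) hone hv
  · intro A _ M _ _ ρ n _ z hz
    have hinr (_ : A) : f (1 : FreeGroup Γ) = 1 := map_one f
    have hres := (res_res (f.prodMap (MonoidHom.id A)) (MonoidHom.inr (FreeGroup Γ) A) n z).trans
      (res_eq_zero_of_mem_fil_succ (i := (f.prodMap (MonoidHom.id A)).comp (MonoidHom.inr _ A))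
        hinr hz)
    have hinj : Function.Injective (MonoidHom.inr (FreeGroup Γ) A) := Prod.mk_right_injective 1
    exact (hasSplitLifting_freeGroup_one.of_one hinj hinj n).res_shift_eq_zero hinr hres hres

theorem IsCohTrivial.vanishesOnFunctions {ℓ₁ : G →* P} {ℓ₂ : C →* P} {f : P →* Γ}
    {i : (f.comp ℓ₁).ker →* C} {J : ℕ} (hi : IsCohTrivial k i J)
    (hℓ : ℓ₁.comp (f.comp ℓ₁).ker.subtype = ℓ₂.comp i) (hfℓ : f.comp ℓ₂ = 1) :
    VanishesOnFunctions k f ℓ₁ J := by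
  intro A _ M _ _ ρ n hn v hv
  let fA := f.prodMap (MonoidHom.id A)
  let ℓ₁A := ℓ₁.prodMap (MonoidHom.id A)
  let N := (f.comp ℓ₁).ker
  let ρA := ρ.comp (MonoidHom.inr Γ A)
  have hN (s : N × A) : f (ℓ₁ s.1) = 1 := s.1.2
  refine eq_zero_of_forall_map_proj_eq_zero (q := (MonoidHom.fst Γ A).comp (fA.comp ℓ₁A))
    (i := N.subtype.prodMap (MonoidHom.id A)) (ρ := (ρ.comp fA).comp ℓ₁A)
    (N.subtype_injective.prodMap Function.injective_id) hN
    (fun s hs => ⟨(⟨s.1, hs⟩, s.2), rfl⟩) _ fun x => ?_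
  have hprojC : IsCompatible ((funRep (MonoidHom.fst Γ A) ρ).comp fA)
      (ρA.comp (MonoidHom.snd C A)) (ℓ₂.prodMap (MonoidHom.id A)) (LinearMap.proj x) :=
    fun s u => by
      have hs : fA (ℓ₂.prodMap (MonoidHom.id A) s) = (1, s.2) :=
        Prod.ext (DFunLike.congr_fun hfℓ s.1) rfl
      change ρ (fA _) (u ((fA _).1⁻¹ * x)) = ρ (1, s.2) (u x)
      rw [hs, inv_one, one_mul]
  have hproj (j : N →* C) : IsCompatible ((funRep (MonoidHom.fst Γ A) ρ).comp fA)
      (ρA.comp (MonoidHom.snd N A)) ((ℓ₂.comp j).prodMap (MonoidHom.id A)) (LinearMap.proj x) :=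
    hprojC.comp (isCompatible_prodMap ρA j)
  have hid : IsCompatible (ρA.comp (MonoidHom.snd N A))
      (((ρ.comp fA).comp ℓ₁A).comp (N.subtype.prodMap (MonoidHom.id A))) (MonoidHom.id _)
      LinearMap.id := fun s m =>
    congrArg (fun y => ρ y m) (Prod.ext (hN s).symm rfl)
  have hv₁ : map (hproj 1) n v = 0 :=
    map_eq_zero_of_res_eq_zero (f := MonoidHom.inr P A) (g := MonoidHom.snd N A) (hproj 1)
      (MonoidHom.ext fun _ => Prod.ext (map_one ℓ₂) rfl) hv
  have hvi : map (hproj i) n v = 0 :=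
    (map_comp hprojC (isCompatible_prodMap ρA i) n v).symm.trans <|
      (hi ρA hn _).trans <| (map_comp hprojC (isCompatible_prodMap ρA 1) n v).trans hv₁
  refine (map_map (isCompatible_res _ ℓ₁A) _ ((hproj i).comp hid) ?_ rfl n v).trans ?_
  · exact MonoidHom.ext fun s => Prod.ext (DFunLike.congr_fun hℓ s.1).symm rfl
  · exact (map_comp (hproj i) hid n v).symm.trans ((congrArg _ hvi).trans (map_zero _))

theorem IsSkeleton.succ_of_isAmalgam {ℓ₁ : G →* P} {ℓ₂ : C →* P} {f : P →* Γ}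
    {i : (f.comp ℓ₁).ker →* C} {p J : ℕ} (hfp : IsSkeleton k (f.comp ℓ₁) (p + 1) J)
    (hi : IsCohTrivial k i J) (h : IsAmalgam (f.comp ℓ₁).ker.subtype i ℓ₁ ℓ₂)
    (h₁ : Function.Injective ℓ₁) (h₂ : Function.Injective ℓ₂) (hf : Function.Surjective f)
    (hfℓ : f.comp ℓ₂ = 1) : IsSkeleton k f (p + 2) J := by
  refine hfp.succ hf (hi.vanishesOnFunctions h.comm hfℓ) ?_
  intro A _ M _ _ ρ n hn z hz
  let fA := f.prodMap (MonoidHom.id A)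
  have hres₁ : res (ℓ₁.prodMap (MonoidHom.id A)) n (res fA n z) = 0 :=
    (res_res fA _ n z).trans ((hfp hn z).2 hz)
  have hres₂ : res (ℓ₂.prodMap (MonoidHom.id A)) n (res fA n z) = 0 :=
    (res_res fA _ n z).trans <| res_eq_zero_of_mem_fil_succ
      (i := fA.comp (ℓ₂.prodMap (MonoidHom.id A))) (fun s => DFunLike.congr_fun hfℓ s.1) hz
  exact ((h.prodMap_id A).hasSplitLifting_one.of_one (h₁.prodMap Function.injective_id)
    (h₂.prodMap Function.injective_id) n).res_shift_eq_zero (f := fA) (q := MonoidHom.fst Γ A)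
    (fun s => s.1.2) hres₁ hres₂

theorem exists_surjective_isSkeleton (k Γ : Type u) [CommRing k] [Group Γ] (p J : ℕ) :
    ∃ (G : Type u) (_ : Group G) (f : G →* Γ),
      Function.Surjective f ∧ IsSkeleton k f (p + 2) J := by
  induction p with
  | zero =>
    exact ⟨FreeGroup Γ, inferInstance, FreeGroup.lift id,
      fun x => ⟨FreeGroup.of x, FreeGroup.lift_apply_of⟩, isSkeleton_freeGroup_lift J⟩
  | succ p ih =>
    obtain ⟨G, _, f, hf, hfp⟩ := ih
    obtain ⟨C, _, i, hi, hiJ⟩ := exists_isCohTrivial k f.ker J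
    obtain ⟨P, _, ℓ₁, ℓ₂, h₁, h₂, h⟩ := exists_isAmalgam f.ker.subtype_injective hi
    obtain ⟨f', rfl, hf₂⟩ := h.exists_lift f 1 (MonoidHom.ext fun x => x.2)
    have hf' : Function.Surjective f' := Function.Surjective.of_comp hf
    exact ⟨P, inferInstance, f', hf', hfp.succ_of_isAmalgam hiJ h h₁ h₂ hf' hf₂⟩

theorem exists_isSkeleton (k Γ : Type u) [CommRing k] [Group Γ] (p J : ℕ) :
    ∃ (G : Type u) (_ : Group G) (f : G →* Γ), IsSkeleton k f (p + 1) J := by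
  cases p with
  | zero => exact ⟨PUnit, inferInstance, 1, isSkeleton_one 1 J⟩
  | succ p =>
    obtain ⟨G, _, f, -, hf⟩ := exists_surjective_isSkeleton k Γ p J
    exact ⟨G, inferInstance, f, hf⟩

end Construction

section SecondFactor

variable {k : Type u} [CommRing k] {G Γ A : Type u} [Group G] [Group Γ] [Group A]
  {M : Type u} [AddCommGroup M] [Module k M] {f : G →* Γ} {p J : ℕ}

theorem IsSkeleton.res_id_prodMap_eq_zero_iff (hf : IsSkeleton k f p J)
    {ρ : Representation k (A × Γ) M} {n : ℕ} (hn : n ≤ J) (y : H ρ n) :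
    res ((MonoidHom.id A).prodMap f) n y = 0 ↔ y ∈ fil (MonoidHom.snd A Γ) p n ρ := by
  let swap (B B' : Type u) [Group B] [Group B'] : B × B' →* B' × B := MulEquiv.prodComm.toMonoidHom
  let fA := f.prodMap (MonoidHom.id A)
  let Af := (MonoidHom.id A).prodMap f
  have hback : IsCompatible (ρ.comp (swap Γ A)) ρ (swap A Γ) LinearMap.id := fun _ _ => rfl
  have hback' : IsCompatible ((ρ.comp Af).comp (swap G A)) (ρ.comp Af) (swap A G)
    LinearMap.id := fun _ _ => rfl
  have hres : res (swap G A) n (res Af n y) = res fA n (res (swap Γ A) n y) :=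
    (res_res Af _ n y).trans (res_res (swap Γ A) fA n y).symm
  have hy : map hback n (res (swap Γ A) n y) = y :=
    (map_map _ hback (isCompatible_id ρ) rfl rfl n y).trans (map_id n y)
  have hy' : map hback' n (res (swap G A) n (res Af n y)) = res Af n y :=
    (map_map _ hback' (isCompatible_id _) rfl rfl n _).trans (map_id n _)
  have hswap := hf hn (res (swap Γ A) n y)
  refine ⟨fun h => ?_, fun h => ?_⟩
  · have hGA : res (swap G A) n (res Af n y) = 0 := (congrArg _ h).trans (map_zero _)
    have hmem := map_mem_fil hback (q := MonoidHom.fst Γ A) (q' := MonoidHom.snd A Γ)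
      (e := MonoidHom.id Γ) rfl (hswap.1 (hres.symm.trans hGA))
    exact hy ▸ hmem
  · have hmem : res (swap Γ A) n y ∈ fil (MonoidHom.fst Γ A) p n (ρ.comp (swap Γ A)) :=
      map_mem_fil (isCompatible_res ρ (swap Γ A)) (q := MonoidHom.snd A Γ) (e := MonoidHom.id Γ)
        rfl h
    exact hy'.symm.trans ((congrArg _ (hres.trans (hswap.2 hmem))).trans (map_zero _))

theorem IsSkeleton.res_eq_zero_of_le (hf : IsSkeleton k f p J) {ρ : Representation k Γ M} {n : ℕ}
    (hpn : p ≤ n) (hn : n ≤ J) (x : H ρ n) : res f n x = 0 := by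
  let fst := MonoidHom.fst Γ PUnit.{u + 1}
  have hfst : Function.Injective fst := fun _ _ h => Prod.ext h rfl
  have hf' : IsCompatible (ρ.comp fst) (ρ.comp f)
    ((f.prodMap (MonoidHom.id _)).comp (MonoidHom.inl G PUnit.{u + 1})) LinearMap.id :=
    fun _ _ => rfl
  exact (map_map (isCompatible_res ρ fst) hf' _ rfl rfl n x).symm.trans <|
    map_eq_zero_of_res_eq_zero hf' rfl ((hf hn _).2 (mem_fil_of_injective hfst _ hpn _))

theorem IsSkeleton.res_mem_fil_succ (hf : IsSkeleton k f (p + 1) J) {i n : ℕ}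
    (hin : p + 1 + i ≤ n) (hn : n ≤ J) {ρ : Representation k (Γ × A) M} {x : H ρ n}
    (hx : x ∈ fil (MonoidHom.snd Γ A) i n ρ) :
    res (f.prodMap (MonoidHom.id A)) n x ∈ fil (MonoidHom.snd G A) (i + 1) n _ := by
  let fA := f.prodMap (MonoidHom.id A)
  obtain ⟨n, rfl⟩ : ∃ m, n = m + 1 := ⟨n - 1, by omega⟩
  induction i generalizing n M with
  | zero =>
    have hinl : res (MonoidHom.inl G A) (n + 1) (res fA (n + 1) x) = 0 :=
      (res_res fA _ _ x).trans <| (res_res (MonoidHom.inl Γ A) f _ x).symm.trans <|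
        hf.res_eq_zero_of_le hin hn _
    obtain ⟨z, hz⟩ := exists_shift_eq_of_res_eq_zero (q := MonoidHom.snd G A)
      (Prod.mk_left_injective 1) (fun _ => rfl) (fun y hy => ⟨y.1, Prod.ext rfl hy.symm⟩) _ hinl
    exact hz ▸ Submodule.mem_map_of_mem Submodule.mem_top
  | succ i ih =>
    obtain ⟨z, hz, rfl⟩ := hx
    obtain ⟨m, rfl⟩ : ∃ m, n = m + 1 := ⟨n - 1, by omega⟩
    have hmem := ih m (by omega) (by omega) hz
    rw [res_shift fA (m + 1) z]
    exact Submodule.mem_map_of_mem (f := shift (MonoidHom.snd G A) (ρ.comp fA) (m + 1)) hmem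

end SecondFactor

theorem exists_quasiInverse {K V W : Type*} [Field K] [AddCommGroup V] [AddCommGroup W]
    [Module K V] [Module K W] (φ : V →ₗ[K] W) : ∃ ν : W →ₗ[K] V, φ ∘ₗ ν ∘ₗ φ = φ := by
  obtain ⟨g, hg⟩ := φ.rangeRestrict.exists_rightInverse_of_surjective φ.range_rangeRestrict
  obtain ⟨ν, hν⟩ := g.exists_extend
  have hφν (w : LinearMap.range φ) : φ (ν w) = w :=
    (congrArg φ (LinearMap.congr_fun hν w)).trans (congrArg Subtype.val (LinearMap.congr_fun hg w))
  exact ⟨ν, LinearMap.ext fun v => hφν (φ.rangeRestrict v)⟩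

section Orbit

variable {k : Type u} [CommRing k] {G A : Type u} [Group G] [Group A]
  {M : Type u} [AddCommGroup M] [Module k M]

variable (G) in
/-- The representation of `G × A` obtained from one of `A` by letting `G` act trivially. -/
abbrev inflate (σ : Representation k A M) : Representation k (G × A) M :=
  σ.comp (MonoidHom.snd G A)

/-- The map sending a vector to its orbit, as a function on the group. -/
def orbitMap (σ : Representation k A M) : M →ₗ[k] A → M := LinearMap.pi fun a => σ a

theorem isCompatible_orbitMap (σ : Representation k A M) :
    IsCompatible ((inflate G σ).comp (MonoidHom.inl G A))
      (funRep (MonoidHom.snd G A) (inflate G σ)) (MonoidHom.fst G A)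
      (orbitMap σ) := fun x m => by
  ext a
  simp [orbitMap, funRep_apply, ← Module.End.mul_apply, ← map_mul]

theorem exists_map_orbitMap_eq (σ : Representation k A M) {n : ℕ}
    (v : H (funRep (MonoidHom.snd G A) (inflate G σ)) n) :
    ∃ t, map (isCompatible_orbitMap (G := G) σ) n t = v := by
  have hinl (g : G) : MonoidHom.snd G A (MonoidHom.inl G A g) = 1 := rfl
  have hproj := isCompatible_proj hinl (inflate G σ) 1
  have horbit := isCompatible_orbitMap (G := G) σ
  let t := map hproj n v
  have ht : map hproj n (map horbit n t) = t := by
    refine (map_map horbit hproj (isCompatible_id _) rfl ?_ n t).trans (map_id n t)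
    exact LinearMap.ext fun m => (LinearMap.congr_fun (map_one σ) m).symm
  refine ⟨t, sub_eq_zero.1 <| eq_zero_of_forall_map_proj_eq_zero (Prod.mk_left_injective 1) hinl
    (fun x hx => ⟨x.1, Prod.ext rfl hx.symm⟩) _ fun a => ?_⟩
  refine map_proj_apply_eq_zero hinl (g := (1, a))
    (fun g => (MonoidHom.commute_inl_inr g a).symm) ?_
  rw [map_sub, ht, sub_self]

theorem isCompatible_inl_cokerRep (σ : Representation k A M) (ν : Coker k A M →ₗ[k] M) :
    IsCompatible (cokerRep (MonoidHom.snd G A) (inflate G σ))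
      ((inflate G σ).comp (MonoidHom.inl G A)) (MonoidHom.inl G A) ν := fun x u => by
  obtain ⟨u, rfl⟩ := Submodule.mkQ_surjective _ u
  have hu : funRep (MonoidHom.snd G A) (inflate G σ) (MonoidHom.inl G A x) u = u := by
    ext a
    simp [funRep_apply]
  have hσ : (inflate G σ).comp (MonoidHom.inl G A) x = LinearMap.id := map_one σ
  rw [hσ]
  exact congrArg (fun w => ν (Submodule.mkQ _ w)) hu

/-- The class of the orbit of a vector in the cokernel of `M → (A → M)`. -/
def orbitClass (σ : Representation k A M) : M →ₗ[k] Coker k A M := Submodule.mkQ _ ∘ₗ orbitMap σ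

theorem isCompatible_orbitClass (σ : Representation k A M) :
    IsCompatible ((inflate G σ).comp (MonoidHom.inl G A))
      (cokerRep (MonoidHom.snd G A) (inflate G σ)) (MonoidHom.fst G A)
      (orbitClass σ) :=
  (isCompatible_orbitMap σ).comp (isShortExact_funRep _ _).compat_right

theorem exists_map_orbitClass_eq {σ : Representation k A M} {n : ℕ}
    {z : H (cokerRep (MonoidHom.snd G A) (inflate G σ)) n}
    (hz : shift _ _ n z = 0) : ∃ t, map (isCompatible_orbitClass (G := G) σ) n t = z := by
  let E := isShortExact_funRep (MonoidHom.snd G A) (inflate G σ)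
  obtain ⟨v, rfl⟩ := (E.exact_map_δ n z).1 hz
  obtain ⟨t, rfl⟩ := exists_map_orbitMap_eq σ v
  exact ⟨t, (map_comp (isCompatible_orbitMap σ) E.compat_right n t).symm⟩

theorem shift_map_orbitClass (σ : Representation k A M) (n : ℕ)
    (t : H ((inflate G σ).comp (MonoidHom.inl G A)) n) :
    shift _ _ n (map (isCompatible_orbitClass (G := G) σ) n t) = 0 := by
  let E := isShortExact_funRep (MonoidHom.snd G A) (inflate G σ)
  exact (E.exact_map_δ n _).2 ⟨_, map_comp (isCompatible_orbitMap σ) E.compat_right n t⟩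

theorem map_map_orbitClass {Γ : Type u} [Group Γ] {f : G →* Γ} (σ : Representation k A M)
    (ν : Coker k A M →ₗ[k] M)
    (hf : IsCompatible (cokerRep (MonoidHom.snd Γ A) (inflate Γ σ))
      (cokerRep (MonoidHom.snd G A) (inflate G σ)) (f.prodMap (MonoidHom.id A)) LinearMap.id)
    {n : ℕ} (z : H (cokerRep (MonoidHom.snd Γ A) (inflate Γ σ)) n) :
    map hf n (map (isCompatible_orbitClass σ) n (map (isCompatible_inl_cokerRep σ ν) n z)) =
      map (isCompatible_orbitClass σ) n (map (isCompatible_inl_cokerRep σ ν) n (map hf n z)) := by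
  have hΓ := (isCompatible_inl_cokerRep (G := Γ) σ ν).comp (isCompatible_orbitClass σ)
  have hG := (isCompatible_inl_cokerRep (G := G) σ ν).comp (isCompatible_orbitClass σ)
  calc _ = map hf n (map hΓ n z) := congrArg _ (map_comp _ _ n z)
    _ = map (hf.comp hG) n z := map_map hΓ hf _ rfl rfl n z
    _ = map hG n (map hf n z) := (map_comp hf hG n z).symm
    _ = _ := (map_comp _ _ n _).symm

end Orbit

section Correction

variable {k : Type u} [Field k] {G Γ A : Type u} [Group G] [Group Γ] [Group A]
  {M : Type u} [AddCommGroup M] [Module k M]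

/-- The shift kills classes pulled back from `Γ` along `orbitClass σ`, so `z` may be corrected by
such a class: the restriction of `z` to `Γ`, transported along `orbitClass σ ∘ ν`, where `ν` is a
quasi-inverse of `orbitClass σ`. The existence of `ν` is where `k` has to be a field. -/
theorem exists_shift_eq_and_res_eq_zero (f : G →* Γ) {σ : Representation k A M} {b n : ℕ}
    {z : H (cokerRep (MonoidHom.snd Γ A) (inflate Γ σ)) n}
    (hz : z ∈ fil (MonoidHom.snd Γ A) b n (cokerRep (MonoidHom.snd Γ A) (inflate Γ σ)))
    (hfz : res (f.prodMap (MonoidHom.id A)) (n + 1)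
      (shift (MonoidHom.snd Γ A) (inflate Γ σ) n z) = 0) :
    ∃ z' ∈ fil (MonoidHom.snd Γ A) b n (cokerRep (MonoidHom.snd Γ A) (inflate Γ σ)),
      shift (MonoidHom.snd Γ A) (inflate Γ σ) n z' =
        shift (MonoidHom.snd Γ A) (inflate Γ σ) n z ∧
      res (f.prodMap (MonoidHom.id A)) n z' = 0 := by
  let fA := f.prodMap (MonoidHom.id A)
  obtain ⟨ν, hν⟩ := exists_quasiInverse (orbitClass σ)
  have hνΓ := isCompatible_inl_cokerRep (G := Γ) σ ν
  have hνG := isCompatible_inl_cokerRep (G := G) σ ν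
  have horbitΓ := isCompatible_orbitClass (G := Γ) σ
  have horbitG := isCompatible_orbitClass (G := G) σ
  have hfA : IsCompatible (cokerRep (MonoidHom.snd Γ A) (inflate Γ σ))
      (cokerRep (MonoidHom.snd G A) (inflate G σ)) fA LinearMap.id :=
    isCompatible_res (cokerRep (MonoidHom.snd Γ A) (inflate Γ σ)) fA
  let w := map horbitΓ n (map hνΓ n z)
  have hfz' : shift (MonoidHom.snd G A) (inflate G σ) n (map hfA n z) = 0 :=
    (res_shift fA n z).symm.trans hfz
  obtain ⟨t, ht⟩ := exists_map_orbitClass_eq hfz'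
  have hνt : map horbitG n (map hνG n (map horbitG n t)) = map horbitG n t :=
    (congrArg _ (map_comp horbitG hνG n t)).trans
      (map_map (horbitG.comp hνG) horbitG horbitG rfl hν.symm n t)
  refine ⟨z - w, sub_mem hz ?_, ?_, ?_⟩
  · cases b with
    | zero => exact Submodule.mem_top
    | succ b =>
      have hνz : map hνΓ n z = 0 := map_eq_zero_of_res_eq_zero hνΓ (g := MonoidHom.id Γ) rfl
        (res_eq_zero_of_mem_fil_succ (i := MonoidHom.inl Γ A) (fun _ => rfl) hz)
      have hw : w = 0 := (congrArg (map horbitΓ n) hνz).trans (map_zero _)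
      exact hw ▸ zero_mem _
  · rw [map_sub, shift_map_orbitClass, sub_zero]
  · have hsub : map hfA n (z - w) = 0 := by rw [map_sub, map_map_orbitClass, ← ht, hνt, sub_self]
    exact hsub

end Correction

section Tower

variable {k : Type u} [Field k] {G G' Γ A : Type u} [Group G] [Group G'] [Group Γ] [Group A]
  {M : Type u} [AddCommGroup M] [Module k M]

theorem IsSkeleton.eq_zero_of_mem_fil_of_res_eq_zero {f : G →* Γ} {a J : ℕ}
    (hf : IsSkeleton k f (a + 1) J) {b j : ℕ} (hja : j ≤ a + b) (hjJ : j ≤ J)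
    {σ : Representation k A M} {y : H (inflate Γ σ) j} (hy : y ∈ fil (MonoidHom.snd Γ A) b j _)
    (hfy : res (f.prodMap (MonoidHom.id A)) j y = 0) : y = 0 := by
  induction b generalizing j M with
  | zero => exact eq_zero_of_mem_fil_of_lt (by omega) ((hf hjJ y).1 hfy)
  | succ b ih =>
    cases j with
    | zero => exact (Submodule.mem_bot k).1 hy
    | succ j =>
      obtain ⟨z, hz, rfl⟩ := hy
      obtain ⟨z', hz', hzz', hfz'⟩ := exists_shift_eq_and_res_eq_zero f hz hfy
      have hz'₀ : z' = 0 := ih (σ := cokerRep (MonoidHom.id A) σ) (by omega) (by omega) hz' hfz'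
      rw [← hzz', hz'₀, map_zero]

variable (k) in
/-- In degrees from `a + i` to `J`, restriction along `f × id` maps every class on `Γ × A` to a
class of filtration `≥ i` over `A`. -/
def RaisesFil (f : G →* Γ) (a i J : ℕ) : Prop :=
  ∀ ⦃A : Type u⦄ [Group A] ⦃M : Type u⦄ [AddCommGroup M] [Module k M]
    ⦃ρ : Representation k (Γ × A) M⦄ ⦃n : ℕ⦄, a + i ≤ n → n ≤ J → ∀ x : H ρ n,
      res (f.prodMap (MonoidHom.id A)) n x ∈ fil (MonoidHom.snd G A) i n _

variable (k) in
/-- For coefficients on which `Γ` acts trivially, restriction along `f × id` is injective on the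
classes on `Γ × A` of degree `≤ J` whose degree exceeds the filtration over `A` by at most `a`. -/
def InjectiveOnFil (f : G →* Γ) (a J : ℕ) : Prop :=
  ∀ ⦃A : Type u⦄ [Group A] ⦃M : Type u⦄ [AddCommGroup M] [Module k M]
    ⦃σ : Representation k A M⦄ ⦃b j : ℕ⦄, j ≤ a + b → j ≤ J → ∀ y : H (inflate Γ σ) j,
      y ∈ fil (MonoidHom.snd Γ A) b j _ → res (f.prodMap (MonoidHom.id A)) j y = 0 → y = 0

theorem RaisesFil.comp_isSkeleton {f : G →* Γ} {g : G' →* G} {a i J : ℕ}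
    (hf : RaisesFil k f a i J) (hg : IsSkeleton k g (a + 1) J) :
    RaisesFil k (f.comp g) a (i + 1) J := by
  intro A _ M _ _ ρ n hn hnJ x
  have hmem := hg.res_mem_fil_succ (by omega) hnJ (hf (by omega) hnJ x)
  exact res_res (f.prodMap (MonoidHom.id A)) (g.prodMap (MonoidHom.id A)) n x ▸ hmem

theorem InjectiveOnFil.comp_isSkeleton {f : G →* Γ} {g : G' →* G} {a J : ℕ}
    (hf : InjectiveOnFil k f a J) (hg : IsSkeleton k g (a + 1) J) :
    InjectiveOnFil k (f.comp g) a J := by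
  intro A _ M _ _ σ b j hj hjJ y hy hgy
  refine hf hj hjJ y hy <| hg.eq_zero_of_mem_fil_of_res_eq_zero (σ := σ) hj hjJ ?_ ?_
  · exact map_mem_fil (isCompatible_res (inflate Γ σ) (f.prodMap (MonoidHom.id A)))
      (e := MonoidHom.id A) rfl hy
  · exact (res_res (f.prodMap (MonoidHom.id A)) (g.prodMap (MonoidHom.id A)) j y).trans hgy

variable (k Γ) in
theorem exists_raisesFil_injectiveOnFil (a i J : ℕ) :
    ∃ (G : Type u) (_ : Group G) (f : G →* Γ), RaisesFil k f a i J ∧ InjectiveOnFil k f a J := by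
  induction i with
  | zero =>
    refine ⟨Γ, inferInstance, MonoidHom.id Γ, ?_, ?_⟩
    · exact fun _ _ _ _ _ _ _ _ _ _ => Submodule.mem_top
    · exact fun _ _ _ _ _ _ _ _ _ _ y _ hy => (map_id _ y).symm.trans hy
  | succ i ih =>
    obtain ⟨G, _, f, hf, hfi⟩ := ih
    obtain ⟨G', _, g, hg⟩ := exists_isSkeleton k G a J
    exact ⟨G', inferInstance, f.comp g, hf.comp_isSkeleton hg, hfi.comp_isSkeleton hg⟩

end Tower

section Separation

variable {k : Type u} [Field k] {Γ₀ Γ₁ : Type u} [Group Γ₀] [Group Γ₁] {M N : Type u}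
  [AddCommGroup M] [Module k M] [AddCommGroup N] [Module k N]

theorem exists_mem_fil_and_notMem_fil_succ {K Γ : Type u} [Group K] [Group Γ] (q : K →* Γ)
    {ρ : Representation k K M} {r : ℕ} {y : H ρ r} (hy : y ≠ 0) :
    ∃ b ≤ r, y ∈ fil q b r ρ ∧ y ∉ fil q (b + 1) r ρ := by
  by_contra! h
  have hmem (b : ℕ) (hb : b ≤ r + 1) : y ∈ fil q b r ρ := by
    induction b with
    | zero => exact Submodule.mem_top
    | succ b ih => exact h b (by omega) (ih (by omega))
  exact hy (eq_zero_of_mem_fil_of_lt (by omega) (hmem (r + 1) le_rfl))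

theorem exists_res_eq_zero_and_res_ne_zero {ρ : Representation k (Γ₀ × Γ₁) M} {n r : ℕ}
    (hrn : r < n) (x : H ρ n) {σ : Representation k Γ₁ N} {y : H (inflate Γ₀ σ) r} (hy : y ≠ 0) :
    ∃ (G₀ G₁ : Type u) (_ : Group G₀) (_ : Group G₁) (f₀ : G₀ →* Γ₀) (f₁ : G₁ →* Γ₁),
      res (f₀.prodMap f₁) n x = 0 ∧ res (f₀.prodMap f₁) r y ≠ 0 := by
  obtain ⟨b, hbr, hyb, hyb'⟩ := exists_mem_fil_and_notMem_fil_succ (MonoidHom.snd Γ₀ Γ₁) hy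
  obtain ⟨G₁, _, f₁, hf₁⟩ := exists_isSkeleton k Γ₁ b n
  obtain ⟨G₀, _, f₀, hraise, hinj⟩ := exists_raisesFil_injectiveOnFil k Γ₀ (r - b) (b + 1) n
  refine ⟨G₀, G₁, inferInstance, inferInstance, f₀, f₁, ?_, fun hfy => hyb' ?_⟩
  · have hx := (hf₁.res_id_prodMap_eq_zero_iff le_rfl _).2 (hraise (by omega) le_rfl x)
    exact (res_res (f₀.prodMap (MonoidHom.id Γ₁)) ((MonoidHom.id G₀).prodMap f₁) n x).symm.trans hx
  · refine (hf₁.res_id_prodMap_eq_zero_iff hrn.le y).1 <| hinj (σ := σ.comp f₁) (b := b) (by omega)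
      hrn.le _ ?_ ?_
    · exact map_mem_fil (isCompatible_res (inflate Γ₀ σ) ((MonoidHom.id Γ₀).prodMap f₁)) (e := f₁)
        rfl hyb
    · exact (res_res ((MonoidHom.id Γ₀).prodMap f₁) (f₀.prodMap (MonoidHom.id G₁)) r y).trans hfy

end Separation

section HomologicalComplex

variable {R : Type v} [Ring R] {ι : Type*} {c : ComplexShape ι}

theorem homologyπ_apply_eq_zero_iff (K : HomologicalComplex (ModuleCat.{w} R) c) {i j : ι}
    (hi : c.prev j = i) (z : K.cycles j) :
    K.homologyπ j z = 0 ↔ ∃ b, K.d i j b = K.iCycles j z := by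
  have hexact : Function.Exact (K.toCycles i j) (K.homologyπ j) :=
    (ShortComplex.ShortExact.moduleCat_exact_iff_function_exact _).1 <|
      ShortComplex.exact_of_g_is_cokernel
        (ShortComplex.mk _ _ (K.toCycles_comp_homologyπ i j)) (K.homologyIsCokernel i j hi)
  have hinj : Function.Injective (K.iCycles j) := (ModuleCat.mono_iff_injective _).1 inferInstance
  refine (hexact z).trans (exists_congr fun b => ?_)
  rw [← hinj.eq_iff, ← ConcreteCategory.comp_apply, K.toCycles_i]

end HomologicalComplex

section TrivialCoefficients

variable {G G' : Type} [Group G] [Group G']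

/-- The trivial representation of `G` on `ℂ`; as the unit of the monoid of homomorphisms it
restricts definitionally to itself. -/
abbrev triv (G : Type) [Group G] : Representation ℂ G ℂ := 1

theorem contractNth_mul_eq_ite {n j : ℕ} (hj : j < n) (v : Fin (n + 1) → G) :
    Fin.contractNth ⟨j, by omega⟩ (· * ·) v = fun i : Fin n =>
      if i.val < j then v i.castSucc
      else if i.val = j then
        v ⟨j % (n + 1), Nat.mod_lt j (Nat.succ_pos n)⟩ *
          v ⟨(j + 1) % (n + 1), Nat.mod_lt (j + 1) (Nat.succ_pos n)⟩
      else v i.succ := by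
  funext i
  refine if_congr Iff.rfl rfl (ite_congr rfl (fun hi => ?_) fun _ => rfl)
  obtain rfl : i.val = j := hi
  congr 2 <;> ext <;> simp [Nat.mod_eq_of_lt, hj, hj.trans]

theorem contractNth_last_mul {n : ℕ} (v : Fin (n + 1) → G) :
    Fin.contractNth (Fin.last n) (· * ·) v = fun i => v i.castSucc :=
  funext fun i => Fin.contractNth_apply_of_lt _ _ _ _ i.isLt

theorem gcD_eq_d (n : ℕ) (c : (Fin n → G) → ℂ) :
    gcD G n c = inhomogeneousCochains.d (Rep.of (triv G)) n c := by
  funext v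
  refine .trans ?_ (inhomogeneousCochains.d_hom_apply (Rep.of (triv G)) n c v).symm
  rw [Fin.sum_univ_castSucc, ← add_assoc, contractNth_last_mul]
  refine congrArg
    (fun s : ℂ => c (fun i => v i.succ) + s + (-1) ^ (n + 1) * c fun i => v i.castSucc) ?_
  exact (Finset.sum_range _).trans <| Finset.sum_congr rfl fun j _ =>
    congrArg (fun w => (-1 : ℂ) ^ (j.val + 1) * c w) (contractNth_mul_eq_ite j.isLt v).symm

/-- Mathlib's complex of inhomogeneous cochains, for the trivial representation on `ℂ`. -/
noncomputable abbrev cochains (G : Type) [Group G] : CochainComplex (ModuleCat ℂ) ℕ :=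
  groupCohomology.inhomogeneousCochains (Rep.of (triv G))

theorem cochains_d_apply (n : ℕ) (c : (Fin n → G) → ℂ) :
    (cochains G).d n (n + 1) c = gcD G n c := by
  rw [groupCohomology.inhomogeneousCochains.d_def]
  exact (gcD_eq_d n c).symm

/-- Cocycles in the sense of `gcZ` as cocycles of Mathlib's complex. -/
noncomputable def toCocycles (G : Type) [Group G] (n : ℕ) : gcZ G n →ₗ[ℂ] (cochains G).cycles n :=
  ((cochains G).liftCycles (ModuleCat.ofHom (gcZ G n).subtype) (n + 1) (by simp) (by
    ext c : 2
    exact (cochains_d_apply n c.1).trans c.2)).hom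

theorem iCycles_toCocycles {n : ℕ} (c : gcZ G n) :
    (cochains G).iCycles n (toCocycles G n c) = c.1 :=
  congrArg (fun F : ModuleCat.of ℂ (gcZ G n) ⟶ (cochains G).X n => F.hom c)
    ((cochains G).liftCycles_i _ _ _ _)

theorem homologyπ_toCocycles_eq_zero_iff {n : ℕ} (c : gcZ G n) :
    (cochains G).homologyπ n (toCocycles G n c) = 0 ↔ c.1 ∈ gcB G n := by
  cases n with
  | zero =>
    refine (homologyπ_apply_eq_zero_iff _ CochainComplex.prev_nat_zero _).trans ?_
    rw [iCycles_toCocycles, (cochains G).shape 0 0 (by simp)]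
    exact ⟨fun ⟨_, h⟩ => h.symm, fun h => ⟨0, Eq.symm h⟩⟩
  | succ n =>
    refine (homologyπ_apply_eq_zero_iff _ (CochainComplex.prev_nat_succ n) _).trans ?_
    rw [iCycles_toCocycles]
    exact exists_congr fun b => by rw [cochains_d_apply]

/-- The comparison of `gcH` with Mathlib's group cohomology. -/
noncomputable def toH (G : Type) [Group G] (n : ℕ) : gcH G n →ₗ[ℂ] H (triv G) n :=
  Submodule.liftQ _ (((cochains G).homologyπ n).hom ∘ₗ toCocycles G n)
    fun c hc => (homologyπ_toCocycles_eq_zero_iff c).2 hc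

theorem toH_injective (G : Type) [Group G] (n : ℕ) : Function.Injective (toH G n) := by
  refine (injective_iff_map_eq_zero _).2 fun x hx => ?_
  obtain ⟨c, rfl⟩ := Submodule.Quotient.mk_surjective _ x
  exact (Submodule.Quotient.mk_eq_zero _).2 ((homologyπ_toCocycles_eq_zero_iff c).1 hx)

theorem toH_gcHmap (f : G →* G') (n : ℕ) (x : gcH G' n) :
    toH G n (gcHmap f n x) = res f n (toH G' n x) := by
  obtain ⟨c, rfl⟩ := Submodule.Quotient.mk_surjective _ x
  let F : cochains G' ⟶ cochains G := groupCohomology.cochainsMap f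
    (Rep.ofHom ⟨LinearMap.id, fun g => LinearMap.ext (isCompatible_res (triv G') f g)⟩ :
      Rep.res f (Rep.of (triv G')) ⟶ Rep.of (triv G))
  have hcocycles : toCocycles G n ⟨gcRes f n c, gcRes_mem_ker f n c.2⟩ =
      HomologicalComplex.cyclesMap F n (toCocycles G' n c) := by
    refine (ModuleCat.mono_iff_injective ((cochains G).iCycles n)).1 inferInstance ?_
    rw [iCycles_toCocycles, ← ConcreteCategory.comp_apply, HomologicalComplex.cyclesMap_i,
      ConcreteCategory.comp_apply, iCycles_toCocycles]
    rfl
  have hπ : (cochains G).homologyπ n (HomologicalComplex.cyclesMap F n (toCocycles G' n c)) =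
      HomologicalComplex.homologyMap F n ((cochains G').homologyπ n (toCocycles G' n c)) := by
    rw [← ConcreteCategory.comp_apply, ← HomologicalComplex.homologyπ_naturality,
      ConcreteCategory.comp_apply]
  exact (congrArg ((cochains G).homologyπ n) hcocycles).trans hπ

end TrivialCoefficients

end SkeletalGroups

open SkeletalGroups in
theorem stmt_1_general {n r : ℕ} (hr : r < n)
    (φ : ∀ (Γ₀ Γ₁ : Type) [Group Γ₀] [Group Γ₁], gcH (Γ₀ × Γ₁) n → gcH (Γ₀ × Γ₁) r)
    (hzero : ∀ (Γ₀ Γ₁ : Type) [Group Γ₀] [Group Γ₁], φ Γ₀ Γ₁ 0 = 0)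
    (hnat : ∀ (Γ₀ Γ₁ Γ₀' Γ₁' : Type) [Group Γ₀] [Group Γ₁] [Group Γ₀'] [Group Γ₁']
      (f₀ : Γ₀ →* Γ₀') (f₁ : Γ₁ →* Γ₁') (x : gcH (Γ₀' × Γ₁') n),
      gcHmap (f₀.prodMap f₁) r (φ Γ₀' Γ₁' x) = φ Γ₀ Γ₁ (gcHmap (f₀.prodMap f₁) n x))
    (Γ₀ Γ₁ : Type) [Group Γ₀] [Group Γ₁] (x : gcH (Γ₀ × Γ₁) n) : φ Γ₀ Γ₁ x = 0 := by
  by_contra hφx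
  have hy : toH (Γ₀ × Γ₁) r (φ Γ₀ Γ₁ x) ≠ 0 :=
    (map_ne_zero_iff _ (toH_injective _ r)).2 hφx
  obtain ⟨G₀, G₁, _, _, f₀, f₁, hx, hne⟩ :=
    exists_res_eq_zero_and_res_ne_zero hr (toH (Γ₀ × Γ₁) n x) (σ := triv Γ₁) hy
  have hfx : gcHmap (f₀.prodMap f₁) n x = 0 :=
    (map_eq_zero_iff _ (toH_injective _ n)).1 ((toH_gcHmap _ n x).trans hx)
  have hfφx : gcHmap (f₀.prodMap f₁) r (φ Γ₀ Γ₁ x) = 0 := by rw [hnat, hfx, hzero]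
  exact hne ((toH_gcHmap _ r _).symm.trans ((congrArg _ hfφx).trans (map_zero _)))

/-- let `n > r ≥ 0`.  Any family of ℂ-linear maps
`φ_{Γ₀,Γ₁} : H^n(Γ₀ × Γ₁; ℂ) → H^r(Γ₀ × Γ₁; ℂ)`, natural in the pair of groups
`(Γ₀, Γ₁)` (with respect to pullback along `f₀ × f₁` for all group homomorphisms
`f₀, f₁`), vanishes identically. -/
theorem stmt_1 (n r : ℕ) (hr : r < n)
    (φ : ∀ (Γ₀ Γ₁ : Type) [Group Γ₀] [Group Γ₁],
      gcH (Γ₀ × Γ₁) n →ₗ[ℂ] gcH (Γ₀ × Γ₁) r)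
    (hnat : ∀ (Γ₀ Γ₁ Γ₀' Γ₁' : Type) [Group Γ₀] [Group Γ₁] [Group Γ₀'] [Group Γ₁']
      (f₀ : Γ₀ →* Γ₀') (f₁ : Γ₁ →* Γ₁'),
      (gcHmap (f₀.prodMap f₁) r).comp (φ Γ₀' Γ₁')
        = (φ Γ₀ Γ₁).comp (gcHmap (f₀.prodMap f₁) n)) :
    ∀ (Γ₀ Γ₁ : Type) [Group Γ₀] [Group Γ₁], φ Γ₀ Γ₁ = 0 := by
  exact fun Γ₀ Γ₁ _ _ => LinearMap.ext <| stmt_1_general hr (fun Γ₀ Γ₁ => φ Γ₀ Γ₁)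
    (fun _ _ => map_zero _)
    (fun _ _ _ _ _ _ _ _ f₀ f₁ => LinearMap.congr_fun (hnat _ _ _ _ f₀ f₁)) Γ₀ Γ₁
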